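/- Let X be the punctured Möbius band with boundary circles C₁ and C₂. Suppose f : X → X is a boundary-preserving map with f(∂X) ⊆ C₂ such that the restriction, viewed as a map f|C₁ : C₁ → C₂, is essential, while the restriction, viewed as a map f|C₂ : C₂ → C₂, is inessential. Then f is boundary-homotopic to a map g : X → X having at most two fixed points, exactly one of which lies in X ∖ ∂X. -/

import Mathlib

open Set

namespace PMB

/-- The square [0,1] × [−1,1] as a subspace of ℝ². -/
def Sq : Set (ℝ × ℝ) := Set.Icc 0 1 ×ˢ Set.Icc (-1) 1

/-- The identification (0,y) ∼ (1,−y) on the square. -/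
def rel (p q : Sq) : Prop :=
  (p : ℝ × ℝ) = (q : ℝ × ℝ) ∨
  ((p : ℝ × ℝ).1 = 0 ∧ (q : ℝ × ℝ).1 = 1 ∧ (p : ℝ × ℝ).2 = -(q : ℝ × ℝ).2) ∨
  ((p : ℝ × ℝ).1 = 1 ∧ (q : ℝ × ℝ).1 = 0 ∧ (q : ℝ × ℝ).2 = -(p : ℝ × ℝ).2)

/-- The Möbius band: the quotient of the square by the identification. -/
def M := Quot rel

instance : TopologicalSpace M := inferInstanceAs (TopologicalSpace (Quot rel))

/-- The quotient map. -/
def qm : Sq → M := Quot.mk rel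

/-- The open disc of radius 1/4 centred at (1/2, 0). -/
def Bdisc : Set (ℝ × ℝ) := Metric.ball (1/2, 0) (1/4)

/-- The circle of radius 1/4 centred at (1/2, 0). -/
def Scirc : Set (ℝ × ℝ) := Metric.sphere (1/2, 0) (1/4)

/-- The punctured Möbius band, as a subset of the Möbius band. -/
def Xset : Set M := {m | m ∉ qm '' {p : Sq | (p : ℝ × ℝ) ∈ Bdisc}}

/-- The punctured Möbius band as a topological space. -/
abbrev X : Type := ↥Xset

/-- The boundary circle of the Möbius band. -/
def C1 : Set X := {x | ∃ p : Sq, qm p = (x : M) ∧ ((p : ℝ × ℝ).2 = 1 ∨ (p : ℝ × ℝ).2 = -1)}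

/-- The boundary circle coming from the removed disc. -/
def C2 : Set X := {x | ∃ p : Sq, qm p = (x : M) ∧ (p : ℝ × ℝ) ∈ Scirc}

/-- The boundary of the punctured Möbius band. -/
def Bd : Set X := C1 ∪ C2

/-- A self-map of the punctured Möbius band is boundary-preserving if it sends ∂X into ∂X. -/
def BoundaryPreserving (f : C(X, X)) : Prop := MapsTo f Bd Bd

/-- Two self-maps are boundary-homotopic if there is a homotopy between them keeping
∂X inside ∂X at all times. -/
def BoundaryHomotopic (f g : C(X, X)) : Prop :=
  ∃ H : ContinuousMap.Homotopy f g, ∀ x : X, x ∈ Bd → ∀ t : unitInterval, H (t, x) ∈ Bd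

/-- A continuous map is inessential if it is homotopic to a constant map. -/
def Inessential {α β : Type*} [TopologicalSpace α] [TopologicalSpace β] (f : C(α, β)) : Prop :=
  ∃ b : β, ContinuousMap.Homotopic f (ContinuousMap.const α b)

/-- A continuous map is essential if it is not homotopic to a constant map. -/
def Essential {α β : Type*} [TopologicalSpace α] [TopologicalSpace β] (f : C(α, β)) : Prop :=
  ¬ Inessential f

/-- The restriction of a self-map of X to a subset `s` mapped into a subset `t`,
as a continuous map between the subspaces. -/
def restrictMap (f : C(X, X)) {s t : Set X} (h : MapsTo f s t) : C(s, t) :=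
  ⟨fun x => ⟨f x, h x.2⟩, Continuous.subtype_mk (f.continuous.comp continuous_subtype_val) _⟩

/-! `X` deformation retracts onto a theta graph in which `C2` is a circle. Once `f` has been made
constant near `C2`, it extends over the removed disc to a map from the Möbius band to this graph,
and the class of `f|C1` is the square of that of the core circle. In the fundamental group of the
graph, which is free on the class of `C2` and one more generator, an element whose square is a
nontrivial power of the class of `C2` is itself such a power; so the map lifts to the covering
belonging to `C2`, which is the circle with two infinite trees attached and deformation retracts
onto the circle. This gives a homotopy from `f` to a map into `C2`, which keeps the image of `C1` in
`C2`. If it is run within a collar of `C2`, while the values are pushed off `C2` radially, then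
fixed points remain only on `C2` and on one concentric circle, and the new map is constant on each
of them. -/

section ThetaGraph

/-- The circle of the theta graph, realised as the diamond `|x| + |y| = 1`. -/
def thetaCircle : Set (ℝ × ℝ) := {p | |p.1| + |p.2| = 1}

/-- The theta graph: the diamond `|x| + |y| = 1` together with its horizontal diagonal. It is a
deformation retract of the punctured Möbius band, with the diamond corresponding to `C2`. -/
def thetaGraph : Set (ℝ × ℝ) := {p | |p.1| + |p.2| = 1 ∨ |p.1| ≤ 1 ∧ p.2 = 0}

lemma thetaCircle_subset_thetaGraph : thetaCircle ⊆ thetaGraph := fun _ hp ↦ Or.inl hp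

lemma abs_fst_le_one_of_mem_thetaGraph {p : ℝ × ℝ} (hp : p ∈ thetaGraph) : |p.1| ≤ 1 := by
  rcases hp with hp | hp
  · linarith [abs_nonneg p.2]
  · exact hp.1

/-- The slopes of the three arms of the theta graph: `0` is the diagonal, `1` and `2` are the upper
and the lower half of the diamond. -/
def armSign : Fin 3 → ℝ := ![0, 1, -1]

/-- The arm with index `s` of the theta graph, parametrised from the vertex `(v, 0)` at `t = 0` to
the vertex `(-v, 0)` at `t = 1`, where `v = ±1`. -/
def arm (v : ℝ) (s : Fin 3) (t : ℝ) : ℝ × ℝ :=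
  (v * (1 - 2 * t), armSign s * (1 - |1 - 2 * t|))

lemma continuous_arm (v : ℝ) (s : Fin 3) : Continuous (arm v s) := by
  unfold arm
  fun_prop

lemma arm_neg (v : ℝ) (s : Fin 3) (t : ℝ) : arm (-v) s t = arm v s (1 - t) := by
  have h : 1 - 2 * (1 - t) = -(1 - 2 * t) := by ring
  rw [arm, arm, h, abs_neg, neg_mul_comm]

lemma arm_zero (v : ℝ) (s : Fin 3) : arm v s 0 = (v, 0) := by simp [arm]

lemma arm_one (v : ℝ) (s : Fin 3) : arm v s 1 = (-v, 0) := by norm_num [arm]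

lemma mul_self_eq_one_of_abs_eq_one {v : ℝ} (hv : |v| = 1) : v * v = 1 := by
  rw [← abs_mul_abs_self, hv, one_mul]

lemma abs_one_sub_two_mul_le_one {t : ℝ} (ht : t ∈ Icc (0 : ℝ) 1) : |1 - 2 * t| ≤ 1 :=
  abs_le.2 ⟨by linarith [ht.2], by linarith [ht.1]⟩

lemma arm_mem_thetaCircle {v : ℝ} (hv : |v| = 1) {s : Fin 3} (hs : s ≠ 0) {t : ℝ}
    (ht : t ∈ Icc (0 : ℝ) 1) : arm v s t ∈ thetaCircle := by
  have hs' : |armSign s| = 1 := by fin_cases s <;> simp [armSign] at hs ⊢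
  have ht' : 0 ≤ 1 - |1 - 2 * t| := sub_nonneg.2 (abs_one_sub_two_mul_le_one ht)
  simp [thetaCircle, arm, abs_mul, hv, hs', abs_of_nonneg ht']

lemma arm_mem_thetaGraph {v : ℝ} (hv : |v| = 1) (s : Fin 3) {t : ℝ} (ht : t ∈ Icc (0 : ℝ) 1) :
    arm v s t ∈ thetaGraph := by
  rcases eq_or_ne s 0 with rfl | hs
  · exact Or.inr ⟨by simpa [arm, abs_mul, hv] using abs_one_sub_two_mul_le_one ht,
      by simp [arm, armSign]⟩
  · exact Or.inl (arm_mem_thetaCircle hv hs ht)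

lemma exists_eq_arm {v : ℝ} (hv : |v| = 1) {p : ℝ × ℝ} (hp : p ∈ thetaGraph)
    (hne : -1 < v * p.1) : ∃ s, ∃ t ∈ Ico (0 : ℝ) 1, p = arm v s t := by
  have hvp : |v * p.1| ≤ 1 := by
    simpa [abs_mul, hv] using abs_fst_le_one_of_mem_thetaGraph hp
  have hfst : v * (v * p.1) = p.1 := by
    rw [← mul_assoc, mul_self_eq_one_of_abs_eq_one hv, one_mul]
  have hsnd : ∃ s, p.2 = armSign s * (1 - |p.1|) := by
    rcases hp with hp | hp
    · rcases abs_choice p.2 with h | h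
      · exact ⟨1, by simp [armSign]; linarith⟩
      · exact ⟨2, by simp [armSign]; linarith⟩
    · exact ⟨0, by simp [armSign, hp.2]⟩
  obtain ⟨s, hs⟩ := hsnd
  have ht : 1 - 2 * ((1 - v * p.1) / 2) = v * p.1 := by ring
  refine ⟨s, (1 - v * p.1) / 2, ⟨?_, ?_⟩, Prod.ext ?_ ?_⟩
  · linarith [(abs_le.1 hvp).2]
  · linarith
  · rw [arm, ht, hfst]
  · rw [arm, ht, abs_mul, hv, one_mul, hs]

lemma exists_eq_arm_of_mem_thetaCircle {v : ℝ} (hv : |v| = 1) {p : ℝ × ℝ} (hp : p ∈ thetaCircle)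
    (hne : -1 < v * p.1) : ∃ s ≠ 0, ∃ t ∈ Ico (0 : ℝ) 1, p = arm v s t := by
  obtain ⟨s, t, ht, rfl⟩ := exists_eq_arm hv (thetaCircle_subset_thetaGraph hp) hne
  rcases eq_or_ne s 0 with rfl | hs
  · refine ⟨1, by decide, t, ht, Prod.ext rfl ?_⟩
    have hp : |v * (1 - 2 * t)| + |0 * _| = 1 := hp
    rw [abs_mul, hv, zero_mul, abs_zero, one_mul, add_zero] at hp
    simp [arm, hp]
  · exact ⟨s, hs, t, ht, rfl⟩

/-- A function on the plane which on arm `s` of the theta graph is the horizontal distance to the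
nearer of the vertices `(±1, 0)`, and which vanishes on the other two arms. -/
def armHeight (s : Fin 3) (p : ℝ × ℝ) : ℝ :=
  (![1 - |p.1| - |p.2|, max p.2 0, max (-p.2) 0] : Fin 3 → ℝ) s

lemma continuous_armHeight (s : Fin 3) : Continuous (armHeight s) := by
  unfold armHeight
  fin_cases s
  · exact show Continuous fun p : ℝ × ℝ ↦ 1 - |p.1| - |p.2| by fun_prop
  · exact show Continuous fun p : ℝ × ℝ ↦ max p.2 0 by fun_prop
  · exact show Continuous fun p : ℝ × ℝ ↦ max (-p.2) 0 by fun_prop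

lemma armHeight_arm {v : ℝ} (hv : |v| = 1) (s s' : Fin 3) {t : ℝ} (ht : t ∈ Icc (0 : ℝ) 1) :
    armHeight s' (arm v s t) = if s' = s then 1 - |1 - 2 * t| else 0 := by
  have h := abs_one_sub_two_mul_le_one ht
  have h' : abs (1 - |1 - 2 * t|) = 1 - |1 - 2 * t| := abs_of_nonneg (by linarith)
  have h'' : abs (|1 - 2 * t| - 1) = 1 - |1 - 2 * t| := by rw [abs_sub_comm, h']
  fin_cases s <;> fin_cases s' <;> simp [armHeight, arm, armSign, abs_mul, hv, h, h', h'']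

/-- The parameter of a point on arm `s`, measured from the vertex `(v, 0)`. On that arm the second
factor equals `(1 - x) / (2 * (1 - |x|))` with `x = v * p.1`, written so as to be continuous at
`x = 1`; on the other two arms the first factor makes the parameter vanish. -/
noncomputable def armParam (v : ℝ) (s : Fin 3) (p : ℝ × ℝ) : ℝ :=
  armHeight s p * max (1 / 2) ((1 - v * p.1) / (2 * (1 + v * p.1)))

lemma one_sub_abs_mul_max {x : ℝ} (hx₁ : -1 < x) :
    (1 - |x|) * max (1 / 2) ((1 - x) / (2 * (1 + x))) = (1 - x) / 2 := by
  have hpos : 0 < 2 * (1 + x) := by linarith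
  rcases le_total 0 x with hx | hx
  · rw [abs_of_nonneg hx, max_eq_left ((div_le_iff₀ hpos).2 (by linarith))]
    ring
  · rw [abs_of_nonpos hx, max_eq_right ((le_div_iff₀ hpos).2 (by linarith))]
    have hne : 1 + x ≠ 0 := by linarith
    field_simp
    ring

lemma continuousOn_armParam (v : ℝ) (s : Fin 3) :
    ContinuousOn (armParam v s) {p | -1 < v * p.1} := by
  refine (continuous_armHeight s).continuousOn.mul (continuousOn_const.sup ?_)
  refine ContinuousOn.div (by fun_prop) (by fun_prop) fun p (hp : -1 < v * p.1) ↦ ?_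
  linarith

lemma armParam_arm {v : ℝ} (hv : |v| = 1) (s s' : Fin 3) {t : ℝ} (ht : t ∈ Ico (0 : ℝ) 1) :
    armParam v s' (arm v s t) = if s' = s then t else 0 := by
  have hx : v * (arm v s t).1 = 1 - 2 * t := by
    rw [arm, ← mul_assoc, mul_self_eq_one_of_abs_eq_one hv, one_mul]
  rw [armParam, armHeight_arm hv s s' (Ico_subset_Icc_self ht), hx, ite_mul, zero_mul,
    one_sub_abs_mul_max (by linarith [ht.2]), sub_sub_cancel, mul_div_cancel_left₀ t two_ne_zero]

end ThetaGraph

section BinaryTree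

/-- The two arms leaving a vertex, other than the one through which it was entered, are chosen by a
letter of a word; this is the index of the arm reached after reading the word, starting with the
diagonal. Words are read from the right, so that prefixes of a path are suffixes of the list. -/
def wordArm : List Bool → Fin 3
  | [] => 0
  | true :: w => wordArm w + 1
  | false :: w => wordArm w + 2

lemma wordArm_cons_ne (b : Bool) (w : List Bool) : wordArm (b :: w) ≠ wordArm w := by
  cases b <;> simp [wordArm]

lemma eq_wordArm_or_exists_eq_wordArm_cons (w : List Bool) (s : Fin 3) :
    s = wordArm w ∨ ∃ b, s = wordArm (b :: w) := by
  simp only [Bool.exists_bool, wordArm]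
  generalize wordArm w = s'
  decide +revert

lemma wordArm_cons_injective (w : List Bool) : Function.Injective fun b ↦ wordArm (b :: w) := by
  intro b b' h
  cases b <;> cases b' <;> simp [wordArm] at h ⊢

/-- The sign of the endpoint at which the edge labelled by a word starts, relative to that of the
root. -/
def wordSign (w : List Bool) : ℝ := (-1) ^ w.length

lemma wordSign_cons (b : Bool) (w : List Bool) : wordSign (b :: w) = -wordSign w := by
  simp [wordSign, pow_succ]

lemma abs_wordSign (w : List Bool) : |wordSign w| = 1 := by simp [wordSign, abs_pow]

lemma wordSign_mul_self (w : List Bool) : wordSign w * wordSign w = 1 :=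
  mul_self_eq_one_of_abs_eq_one (abs_wordSign w)

/-- The point at distance `t` from the start of the edge labelled `w` in the tree whose edges are
the binary words, `w` being followed by `true :: w` and `false :: w`. The tree is realised inside
`List Bool → ℝ`, a point being the indicator function of the edges already traversed. -/
def treePoint (w : List Bool) (t : ℝ) (u : List Bool) : ℝ :=
  if u = w then t else if u <:+ w then 1 else 0

lemma treePoint_self (w : List Bool) (t : ℝ) : treePoint w t w = t := if_pos rfl

lemma treePoint_of_suffix {w u : List Bool} (t : ℝ) (h : u <:+ w) (hne : u ≠ w) :
    treePoint w t u = 1 := by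
  simp [treePoint, h, hne]

lemma treePoint_of_not_suffix {w u : List Bool} (t : ℝ) (h : ¬u <:+ w) : treePoint w t u = 0 := by
  have hne : u ≠ w := by
    rintro rfl
    exact h u.suffix_refl
  simp [treePoint, h, hne]

lemma treePoint_nil_zero : treePoint [] 0 = 0 := by
  funext u
  simp [treePoint]

lemma not_cons_suffix (b : Bool) (w : List Bool) : ¬(b :: w) <:+ w := fun h ↦ by
  simpa using h.length_le

lemma treePoint_cons_zero (b : Bool) (w : List Bool) : treePoint (b :: w) 0 = treePoint w 1 := by
  funext u
  by_cases h : u = b :: w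
  · rw [h, treePoint_self, treePoint_of_not_suffix _ (not_cons_suffix b w)]
  · have hsuffix : u <:+ b :: w ↔ u <:+ w := by rw [List.suffix_cons_iff, or_iff_right h]
    rcases eq_or_ne u w with rfl | hw
    · simp only [treePoint, if_neg h, hsuffix, List.suffix_rfl, if_true]
    · simp only [treePoint, if_neg h, if_neg hw, hsuffix]

lemma treePoint_cons_cons (b b' : Bool) (w : List Bool) (t : ℝ) :
    treePoint (b :: w) t (b' :: w) = if b' = b then t else 0 := by
  have hs : (b' :: w) <:+ (b :: w) → b' = b := fun h ↦ by
    simpa using h.eq_of_length (by simp)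
  by_cases hb : b' = b <;> simp_all [treePoint]

lemma treePoint_pos_iff {w u : List Bool} {t : ℝ} (ht : 0 < t) :
    0 < treePoint w t u ↔ u <:+ w := by
  unfold treePoint
  split_ifs <;> simp_all

lemma treePoint_inj {w w' : List Bool} {t t' : ℝ} (ht : 0 < t) (ht' : 0 < t')
    (h : treePoint w t = treePoint w' t') : w = w' ∧ t = t' := by
  have hw : w <:+ w' := by rwa [← treePoint_pos_iff ht', ← h, treePoint_self]
  have hw' : w' <:+ w := by rwa [← treePoint_pos_iff ht, h, treePoint_self]
  obtain rfl : w = w' := hw.eq_of_length_le hw'.length_le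
  exact ⟨rfl, by simpa [treePoint_self] using congrFun h w⟩

lemma treePoint_ne_zero {w : List Bool} {t : ℝ} (ht : 0 < t) : treePoint w t ≠ 0 := fun h ↦ by
  simpa [treePoint_self, ht.ne'] using congrFun h w

lemma treePoint_eq_zero_or_exists_pos (w : List Bool) {t : ℝ} (ht : t ∈ Icc (0 : ℝ) 1) :
    treePoint w t = 0 ∨ ∃ w', ∃ t' ∈ Ioc (0 : ℝ) 1, treePoint w t = treePoint w' t' := by
  rcases ht.1.lt_or_eq with h | rfl
  · exact Or.inr ⟨w, t, ⟨h, ht.2⟩, rfl⟩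
  · cases w with
    | nil => exact Or.inl treePoint_nil_zero
    | cons b w => exact Or.inr ⟨w, 1, ⟨one_pos, le_rfl⟩, treePoint_cons_zero b w⟩

end BinaryTree

section Cover

/-- The underlying set of the covering space `Cover`. -/
def coverSet : Set ((ℝ × ℝ) × (List Bool → ℝ)) :=
  {q | q.1 ∈ thetaCircle ∧
    (q.2 = 0 ∨ |q.1.1| = 1 ∧ ∃ w, ∃ t ∈ Ioc (0 : ℝ) 1, q.2 = treePoint w t)}

/-- The covering space of the theta graph whose fundamental group is generated by the diamond: the
diamond with an infinite binary tree attached at each of the two vertices `(±1, 0)`. A point is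
recorded by its nearest point on the diamond and its position in the tree. -/
abbrev Cover : Type := ↥coverSet

lemma mem_thetaCircle_of_abs_fst {x : ℝ} (hx : |x| = 1) : (x, (0 : ℝ)) ∈ thetaCircle := by
  simp [thetaCircle, hx]

lemma snd_eq_zero_of_abs_fst {p : ℝ × ℝ} (hp : p ∈ thetaCircle) (hx : |p.1| = 1) : p.2 = 0 := by
  have hp : |p.1| + |p.2| = 1 := hp
  exact abs_eq_zero.1 (by linarith)

lemma mk_treePoint_mem_coverSet {x : ℝ} (hx : |x| = 1) (w : List Bool) {t : ℝ}
    (ht : t ∈ Icc (0 : ℝ) 1) : ((x, 0), treePoint w t) ∈ coverSet := by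
  refine ⟨mem_thetaCircle_of_abs_fst hx, ?_⟩
  rcases treePoint_eq_zero_or_exists_pos w ht with h | h
  · exact Or.inl h
  · exact Or.inr ⟨hx, h⟩

lemma abs_mul_wordSign {x : ℝ} (hx : |x| = 1) (w : List Bool) : |x * wordSign w| = 1 := by
  rw [abs_mul, hx, abs_wordSign, one_mul]

lemma exists_coverProj (q : Cover) : ∃ θ : thetaGraph, (q.1.2 = 0 ∧ θ.1 = q.1.1) ∨
    ∃ w, ∃ t > 0, q.1.2 = treePoint w t ∧ θ.1 = arm (q.1.1.1 * wordSign w) (wordArm w) t := by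
  obtain ⟨⟨p, τ⟩, hp, h | ⟨hp', w, t, ht, h⟩⟩ := q
  · exact ⟨⟨p, thetaCircle_subset_thetaGraph hp⟩, Or.inl ⟨h, rfl⟩⟩
  · exact ⟨⟨_, arm_mem_thetaGraph (abs_mul_wordSign hp' w) _ (Ioc_subset_Icc_self ht)⟩,
      Or.inr ⟨w, t, ht.1, h, rfl⟩⟩

/-- The covering projection: the identity on the diamond, while the edge labelled `w` of a tree is
mapped onto the arm with index `wordArm w`. -/
noncomputable def coverProj (q : Cover) : thetaGraph := (exists_coverProj q).choose

lemma coverProj_of_eq_zero {q : Cover} (h : q.1.2 = 0) : (coverProj q).1 = q.1.1 := by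
  rcases (exists_coverProj q).choose_spec with h' | ⟨w, t, ht, h', -⟩
  · exact h'.2
  · exact absurd (h'.symm.trans h) (treePoint_ne_zero ht)

lemma coverProj_of_eq_treePoint_of_pos {q : Cover} {w : List Bool} {t : ℝ} (ht : 0 < t)
    (h : q.1.2 = treePoint w t) :
    (coverProj q).1 = arm (q.1.1.1 * wordSign w) (wordArm w) t := by
  rcases (exists_coverProj q).choose_spec with h' | ⟨w', t', ht', h', hq⟩
  · exact absurd (h.symm.trans h'.1) (treePoint_ne_zero ht)
  · obtain ⟨rfl, rfl⟩ := treePoint_inj ht ht' (h.symm.trans h')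
    exact hq

lemma coverProj_of_eq_treePoint {q : Cover} {x : ℝ} {w : List Bool} {t : ℝ} (ht : 0 ≤ t)
    (hq : q.1 = ((x, 0), treePoint w t)) :
    (coverProj q).1 = arm (x * wordSign w) (wordArm w) t := by
  rcases ht.lt_or_eq with ht | rfl
  · simpa [hq] using coverProj_of_eq_treePoint_of_pos ht (congrArg Prod.snd hq)
  · cases w with
    | nil => simp [coverProj_of_eq_zero, hq, treePoint_nil_zero, arm_zero, wordSign]
    | cons b w =>
      rw [treePoint_cons_zero] at hq
      rw [coverProj_of_eq_treePoint_of_pos one_pos (congrArg Prod.snd hq), hq, wordSign_cons,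
        arm_zero, arm_one, mul_neg]

lemma neg_one_lt_mul_iff_eq {v x : ℝ} (hv : |v| = 1) (hx : |x| = 1) : -1 < v * x ↔ x = v := by
  rcases eq_or_eq_neg_of_abs_eq hv with rfl | rfl <;>
    rcases eq_or_eq_neg_of_abs_eq hx with rfl | rfl <;> norm_num

lemma mul_neg_iff_eq_neg {v x : ℝ} (hv : |v| = 1) (hx : |x| = 1) : v * x < 0 ↔ x = -v := by
  rcases eq_or_eq_neg_of_abs_eq hv with rfl | rfl <;>
    rcases eq_or_eq_neg_of_abs_eq hx with rfl | rfl <;> norm_num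

/-- The open star of a vertex of `Cover` above the vertex `(v, 0)` of the theta graph: that of the
root for the index `none`, that of the end of the edge labelled `w` for the index `some w`. -/
def vertexStar (v : ℝ) : Option (List Bool) → Set Cover
  | none => {q | q.1.2 [] < 1 ∧ -1 < v * q.1.1.1}
  | some w => {q | 0 < q.1.2 w ∧ (∀ b, q.1.2 (b :: w) < 1) ∧ v * (q.1.1.1 * wordSign w) < 0}

lemma isOpen_vertexStar (v : ℝ) (i : Option (List Bool)) : IsOpen (vertexStar v i) := by
  have hτ (u : List Bool) : Continuous fun q : Cover ↦ q.1.2 u :=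
    (continuous_apply u).comp (by fun_prop)
  have hx (a : ℝ) : Continuous fun q : Cover ↦ v * (q.1.1.1 * a) := by fun_prop
  cases i with
  | none =>
    have hx' : Continuous fun q : Cover ↦ v * q.1.1.1 := by fun_prop
    exact (isOpen_lt (hτ _) continuous_const).inter (isOpen_lt continuous_const hx')
  | some w =>
    simp only [vertexStar, Bool.forall_bool]
    exact (isOpen_lt continuous_const (hτ _)).inter <|
      ((isOpen_lt (hτ _) continuous_const).inter (isOpen_lt (hτ _) continuous_const)).inter <|
      isOpen_lt (hx _) continuous_const

lemma mem_vertexStar_iff_of_eq_zero {v : ℝ} {i : Option (List Bool)} {q : Cover}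
    (hq : q.1.2 = 0) : q ∈ vertexStar v i ↔ i = none ∧ -1 < v * q.1.1.1 := by
  cases i <;> simp [vertexStar, hq]

lemma treePoint_nil_lt_one_iff {w : List Bool} {t : ℝ} :
    treePoint w t [] < 1 ↔ w = [] ∧ t < 1 := by
  cases w <;> simp [treePoint]

lemma treePoint_cons_lt_one_iff {w w' : List Bool} (hw : w' <:+ w) {t : ℝ} :
    (∀ b, treePoint w t (b :: w') < 1) ↔ w = w' ∨ ∃ b, w = b :: w' ∧ t < 1 := by
  constructor
  · intro h
    obtain ⟨l, rfl⟩ := hw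
    rcases List.eq_nil_or_concat l with rfl | ⟨l, c, rfl⟩
    · exact Or.inl rfl
    · have hc := h c
      have hs : (c :: w') <:+ l.concat c ++ w' := ⟨l, by simp⟩
      by_cases hne : c :: w' = l.concat c ++ w'
      · rw [← hne, treePoint_self] at hc
        exact Or.inr ⟨c, hne.symm, hc⟩
      · exact absurd hc (treePoint_of_suffix t hs hne).ge.not_gt
  · rintro (rfl | ⟨b, rfl, ht⟩) b'
    · simp [treePoint_of_not_suffix _ (not_cons_suffix b' w)]
    · rw [treePoint_cons_cons]
      split_ifs <;> linarith

lemma mem_vertexStar_iff_of_eq_treePoint {v : ℝ} (hv : |v| = 1) {i : Option (List Bool)}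
    {q : Cover} {w : List Bool} {t : ℝ} (ht : t ∈ Ioc (0 : ℝ) 1) (hx : |q.1.1.1| = 1)
    (hq : q.1.2 = treePoint w t) : q ∈ vertexStar v i ↔
      q.1.1.1 * wordSign w = v ∧ t < 1 ∧ i = w.tail? ∨
      q.1.1.1 * wordSign w = -v ∧ i = some w := by
  cases i with
  | none =>
    rw [vertexStar, mem_ofPred_eq, hq, treePoint_nil_lt_one_iff, neg_one_lt_mul_iff_eq hv hx]
    cases w <;> simp [wordSign, and_comm]
  | some w' =>
    rw [vertexStar, mem_ofPred_eq, hq, treePoint_pos_iff ht.1,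
      mul_neg_iff_eq_neg hv (abs_mul_wordSign hx w')]
    constructor
    · rintro ⟨hw, hb, hs⟩
      rcases (treePoint_cons_lt_one_iff hw).1 hb with rfl | ⟨b, rfl, h1⟩
      · exact Or.inr ⟨hs, rfl⟩
      · exact Or.inl ⟨by rw [wordSign_cons, mul_neg, hs, neg_neg], h1, rfl⟩
    · rintro (⟨hs, h1, hw⟩ | ⟨hs, hw⟩)
      · obtain ⟨b, rfl⟩ : ∃ b, w = b :: w' := by cases w <;> simp_all
        have hw' := List.suffix_cons b w'
        refine ⟨hw', (treePoint_cons_lt_one_iff hw').2 (Or.inr ⟨b, rfl, h1⟩), ?_⟩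
        rw [← hs, wordSign_cons, mul_neg, neg_neg]
      · obtain rfl : w' = w := by simpa using hw
        exact ⟨w'.suffix_refl, (treePoint_cons_lt_one_iff w'.suffix_refl).2 (Or.inl rfl), hs⟩

lemma vertexStar_cases {v : ℝ} (hv : |v| = 1) {i : Option (List Bool)} {q : Cover}
    (hq : q ∈ vertexStar v i) :
    i = none ∧ q.1.2 = 0 ∧ -1 < v * q.1.1.1 ∨
    (∃ w, ∃ t ∈ Ioo (0 : ℝ) 1, i = w.tail? ∧ q.1 = ((v * wordSign w, 0), treePoint w t)) ∨
    ∃ w, ∃ t ∈ Ioc (0 : ℝ) 1, i = some w ∧ q.1 = ((-v * wordSign w, 0), treePoint w t) := by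
  rcases q.2.2 with h | ⟨hx, w, t, ht, h⟩
  · obtain ⟨hi, hvq⟩ := (mem_vertexStar_iff_of_eq_zero h).1 hq
    exact Or.inl ⟨hi, h, hvq⟩
  · have hy := snd_eq_zero_of_abs_fst q.2.1 hx
    have hxw : q.1.1.1 = q.1.1.1 * wordSign w * wordSign w := by
      rw [mul_assoc, wordSign_mul_self, mul_one]
    rcases (mem_vertexStar_iff_of_eq_treePoint hv ht hx h).1 hq with ⟨hs, ht', hi⟩ | ⟨hs, hi⟩
    · rw [hs] at hxw
      exact Or.inr (Or.inl ⟨w, t, ⟨ht.1, ht'⟩, hi, Prod.ext (Prod.ext hxw hy) h⟩)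
    · rw [hs] at hxw
      exact Or.inr (Or.inr ⟨w, t, ht, hi, Prod.ext (Prod.ext hxw hy) h⟩)

lemma vertexStar_disjoint {v : ℝ} (hv : |v| = 1) {i j : Option (List Bool)} {q : Cover}
    (hi : q ∈ vertexStar v i) (hj : q ∈ vertexStar v j) : i = j := by
  have hv0 : v ≠ -v := by rcases eq_or_eq_neg_of_abs_eq hv with rfl | rfl <;> norm_num
  rcases q.2.2 with hq | ⟨hx, w, t, ht, hq⟩
  · rw [mem_vertexStar_iff_of_eq_zero hq] at hi hj
    rw [hi.1, hj.1]
  · rw [mem_vertexStar_iff_of_eq_treePoint hv ht hx hq] at hi hj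
    grind

/-- The open star of the vertex `(v, 0)` in the theta graph. -/
def thetaStar (v : ℝ) : Set thetaGraph := {θ | -1 < v * θ.1.1}

lemma isOpen_thetaStar (v : ℝ) : IsOpen (thetaStar v) :=
  isOpen_lt continuous_const (by fun_prop)

lemma exists_mem_thetaStar (θ : thetaGraph) : ∃ v : ℝ, |v| = 1 ∧ θ ∈ thetaStar v := by
  rcases le_or_gt θ.1.1 0 with h | h
  · exact ⟨-1, by simp, show -1 < -1 * θ.1.1 by linarith⟩
  · exact ⟨1, by simp, show -1 < 1 * θ.1.1 by linarith⟩

lemma exists_mem_vertexStar {v : ℝ} (hv : |v| = 1) {q : Cover} (hq : coverProj q ∈ thetaStar v) :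
    ∃ i, q ∈ vertexStar v i := by
  have hq : -1 < v * (coverProj q).1.1 := hq
  rcases q.2.2 with h | ⟨hx, w, t, ht, h⟩
  · exact ⟨none, (mem_vertexStar_iff_of_eq_zero h).2 ⟨rfl, by rwa [coverProj_of_eq_zero h] at hq⟩⟩
  · rw [coverProj_of_eq_treePoint_of_pos ht.1 h, arm, ← mul_assoc] at hq
    have hxw := abs_mul_wordSign hx w
    rcases abs_eq_abs.1 (hxw.trans hv.symm) with hs | hs
    · rw [hs, mul_self_eq_one_of_abs_eq_one hv] at hq
      exact ⟨_, (mem_vertexStar_iff_of_eq_treePoint hv ht hx h).2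
        (Or.inl ⟨hs, by linarith, rfl⟩)⟩
    · exact ⟨_, (mem_vertexStar_iff_of_eq_treePoint hv ht hx h).2 (Or.inr ⟨hs, rfl⟩)⟩

end Cover

section Covering

/-- The covering projection on an open star, in the ambient coordinates: the sum of the
displacements from the central vertex along the arms adjacent to it. -/
def starProj (v : ℝ) : Option (List Bool) → (ℝ × ℝ) × (List Bool → ℝ) → ℝ × ℝ
  | none, q => q.1 + (arm v 0 (q.2 []) - (v, 0))
  | some w, q => arm v (wordArm w) (1 - q.2 w) +
      ∑ b, (arm v (wordArm (b :: w)) (q.2 (b :: w)) - (v, 0))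

lemma continuous_starProj (v : ℝ) (i : Option (List Bool)) : Continuous (starProj v i) := by
  have hτ (u : List Bool) : Continuous fun q : (ℝ × ℝ) × (List Bool → ℝ) ↦ q.2 u :=
    (continuous_apply u).comp continuous_snd
  cases i with
  | none =>
    exact continuous_fst.add (((continuous_arm v 0).comp (hτ _)).sub continuous_const)
  | some w =>
    exact ((continuous_arm v _).comp (continuous_const.sub (hτ _))).add <|
      continuous_finsetSum _ fun b _ ↦ ((continuous_arm v _).comp (hτ _)).sub continuous_const

lemma starProj_tail_treePoint (v : ℝ) (w : List Bool) (t : ℝ) :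
    starProj v w.tail? ((v * wordSign w, 0), treePoint w t) = arm v (wordArm w) t := by
  cases w with
  | nil => simp [starProj, wordSign, treePoint_self, wordArm]
  | cons b w =>
    have hw : treePoint (b :: w) t w = 1 :=
      treePoint_of_suffix _ (List.suffix_cons b w) (by simp)
    cases b <;> ext <;> simp [starProj, treePoint_cons_cons, hw, arm_zero] <;> ring

lemma starProj_some_treePoint (v : ℝ) (w : List Bool) (t : ℝ) (p : ℝ × ℝ) :
    starProj v (some w) (p, treePoint w t) = arm v (wordArm w) (1 - t) := by
  simp [starProj, treePoint_self, treePoint_of_not_suffix _ (not_cons_suffix _ w), arm_zero]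

lemma coverProj_of_eq_tail {q : Cover} {v : ℝ} {w : List Bool} {t : ℝ} (ht : 0 ≤ t)
    (hq : q.1 = ((v * wordSign w, 0), treePoint w t)) :
    (coverProj q).1 = arm v (wordArm w) t := by
  rw [coverProj_of_eq_treePoint ht hq, mul_assoc, wordSign_mul_self, mul_one]

lemma coverProj_of_eq_some {q : Cover} {v : ℝ} {w : List Bool} {t : ℝ} (ht : 0 ≤ t)
    (hq : q.1 = ((-v * wordSign w, 0), treePoint w t)) :
    (coverProj q).1 = arm v (wordArm w) (1 - t) := by
  rw [coverProj_of_eq_tail ht hq, arm_neg]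

lemma coverProj_eq_starProj {v : ℝ} (hv : |v| = 1) {i : Option (List Bool)} {q : Cover}
    (hq : q ∈ vertexStar v i) : (coverProj q).1 = starProj v i q.1 := by
  rcases vertexStar_cases hv hq with ⟨rfl, h, -⟩ | ⟨w, t, ht, rfl, h⟩ | ⟨w, t, ht, rfl, h⟩
  · simp [coverProj_of_eq_zero h, starProj, h, arm_zero]
  · rw [coverProj_of_eq_tail ht.1.le h, h, starProj_tail_treePoint]
  · rw [coverProj_of_eq_some ht.1.le h, h, starProj_some_treePoint]

lemma continuous_coverProj : Continuous coverProj := by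
  refine continuous_iff_continuousAt.2 fun q ↦ ?_
  obtain ⟨v, hv, hq⟩ := exists_mem_thetaStar (coverProj q)
  obtain ⟨i, hi⟩ := exists_mem_vertexStar hv hq
  have hc : ContinuousOn (fun q : Cover ↦ (coverProj q).1) (vertexStar v i) :=
    ((continuous_starProj v i).comp continuous_subtype_val).continuousOn.congr fun q hq ↦
      coverProj_eq_starProj hv hq
  exact Topology.IsInducing.subtypeVal.continuousAt_iff.2
    (hc.continuousAt ((isOpen_vertexStar v i).mem_nhds hi))

/-- The section of the covering projection over the open star of `(v, 0)` with values in the open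
star with index `i`, in the ambient coordinates. -/
noncomputable def starSection (v : ℝ) (i : Option (List Bool)) (p : ℝ × ℝ) :
    (ℝ × ℝ) × (List Bool → ℝ) :=
  (i.elim (p.1 + 2 * v * armParam v 0 p, p.2) fun w ↦ (-v * wordSign w, 0),
    fun u ↦ if u.tail? = i then armParam v (wordArm u) p
      else if some u = i then 1 - armParam v (wordArm u) p
      else if ∃ w ∈ i, u <:+ w then 1 else 0)

lemma continuous_starSection (v : ℝ) (i : Option (List Bool)) :
    Continuous fun θ : thetaStar v ↦ starSection v i θ.1.1 := by
  have hparam (s : Fin 3) : Continuous fun θ : thetaStar v ↦ armParam v s θ.1.1 :=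
    (continuousOn_armParam v s).comp_continuous (by fun_prop) fun θ ↦ θ.2
  refine Continuous.prodMk ?_ (continuous_pi fun u ↦ ?_)
  · cases i with
    | none => simpa only [Option.elim_none] using by fun_prop
    | some w => exact continuous_const
  · split_ifs
    · exact hparam _
    · exact continuous_const.sub (hparam _)
    all_goals exact continuous_const

lemma starSection_none_arm {v : ℝ} (hv : |v| = 1) {s : Fin 3} (hs : s ≠ 0) {t : ℝ}
    (ht : t ∈ Ico (0 : ℝ) 1) : starSection v none (arm v s t) = (arm v s t, 0) := by
  have h0 : armParam v 0 (arm v s t) = 0 := by rw [armParam_arm hv s 0 ht, if_neg hs.symm]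
  refine Prod.ext (by simp [starSection, h0]) (funext fun u ↦ ?_)
  cases u <;> simp [starSection, wordArm, h0]

lemma starSection_tail_arm {v : ℝ} (hv : |v| = 1) (w : List Bool) {t : ℝ}
    (ht : t ∈ Ico (0 : ℝ) 1) :
    starSection v w.tail? (arm v (wordArm w) t) = ((v * wordSign w, 0), treePoint w t) := by
  simp only [starSection, armParam_arm hv _ _ ht]
  refine Prod.ext ?_ (funext fun u ↦ ?_)
  · cases w with
    | nil =>
      simp [wordArm, wordSign, arm, armSign]
      ring
    | cons b w => simp [wordSign_cons]
  · cases w with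
    | nil => cases u <;> simp [treePoint]
    | cons b w =>
      have hb (b' : Bool) : wordArm (b' :: w) = wordArm (b :: w) ↔ b' = b :=
        (wordArm_cons_injective w).eq_iff
      rcases eq_or_ne u w with rfl | hu
      · have hu : u.tail? ≠ some u := by cases u <;> simp
        simp [treePoint, hu, (wordArm_cons_ne b u).symm]
      cases u with
      | nil => simp [treePoint, hu]
      | cons b' u =>
        rcases eq_or_ne u w with rfl | hu'
        · simp [treePoint_cons_cons, hb]
        · simp [treePoint, hu, hu', List.suffix_cons_iff (a := b)]

lemma starSection_some_arm {v : ℝ} (hv : |v| = 1) (w : List Bool) {t : ℝ}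
    (ht : t ∈ Ico (0 : ℝ) 1) :
    starSection v (some w) (arm v (wordArm w) t) =
      ((-v * wordSign w, 0), treePoint w (1 - t)) := by
  simp only [starSection, armParam_arm hv _ _ ht]
  refine Prod.ext (by simp) (funext fun u ↦ ?_)
  rcases eq_or_ne u w with rfl | hu
  · cases u <;> simp [treePoint]
  cases u with
  | nil => simp [treePoint, hu]
  | cons b u =>
    rcases eq_or_ne u w with rfl | hu'
    · simp [wordArm_cons_ne, treePoint_of_not_suffix _ (not_cons_suffix b u)]
    · simp [treePoint, hu, hu']

lemma starSection_coverProj {v : ℝ} (hv : |v| = 1) {i : Option (List Bool)} {q : Cover}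
    (hq : q ∈ vertexStar v i) : starSection v i (coverProj q).1 = q.1 := by
  rcases vertexStar_cases hv hq with ⟨rfl, h, hne⟩ | ⟨w, t, ht, rfl, h⟩ | ⟨w, t, ht, rfl, h⟩
  · rw [coverProj_of_eq_zero h]
    obtain ⟨s, hs, t, ht, hst⟩ := exists_eq_arm_of_mem_thetaCircle hv q.2.1 hne
    rw [hst, starSection_none_arm hv hs ht, ← hst, ← h]
  · rw [coverProj_of_eq_tail ht.1.le h, starSection_tail_arm hv w (Ioo_subset_Ico_self ht), h]
  · rw [coverProj_of_eq_some ht.1.le h, starSection_some_arm hv w ⟨by linarith [ht.2],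
      by linarith [ht.1]⟩, sub_sub_cancel, h]

lemma mem_vertexStar_some {v : ℝ} (hv : |v| = 1) {q : Cover} {w : List Bool} {t : ℝ}
    (ht : t ∈ Ioc (0 : ℝ) 1) (hq : q.1 = ((-v * wordSign w, 0), treePoint w t)) :
    q ∈ vertexStar v (some w) := by
  have hx : |q.1.1.1| = 1 := by simp [hq, abs_mul, hv, abs_wordSign]
  refine (mem_vertexStar_iff_of_eq_treePoint hv ht hx (congrArg Prod.snd hq)).2 (Or.inr ⟨?_, rfl⟩)
  rw [hq, mul_assoc, wordSign_mul_self, mul_one]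

lemma mem_vertexStar_tail {v : ℝ} (hv : |v| = 1) {q : Cover} {w : List Bool} {t : ℝ}
    (ht : t ∈ Ico (0 : ℝ) 1) (hq : q.1 = ((v * wordSign w, 0), treePoint w t)) :
    q ∈ vertexStar v w.tail? := by
  have hx : |q.1.1.1| = 1 := by simp [hq, abs_mul, hv, abs_wordSign]
  rcases ht.1.lt_or_eq with ht0 | rfl
  · refine (mem_vertexStar_iff_of_eq_treePoint hv ⟨ht0, ht.2.le⟩ hx (congrArg Prod.snd hq)).2
      (Or.inl ⟨?_, ht.2, rfl⟩)
    rw [hq, mul_assoc, wordSign_mul_self, mul_one]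
  · cases w with
    | nil =>
      rw [treePoint_nil_zero] at hq
      refine (mem_vertexStar_iff_of_eq_zero (congrArg Prod.snd hq)).2 ⟨rfl, ?_⟩
      simp [hq, wordSign, mul_self_eq_one_of_abs_eq_one hv]
    | cons b w =>
      rw [treePoint_cons_zero, wordSign_cons, mul_neg, ← neg_mul] at hq
      exact mem_vertexStar_some hv ⟨one_pos, le_rfl⟩ hq

lemma exists_starSection_eq {v : ℝ} (hv : |v| = 1) (i : Option (List Bool)) {θ : thetaGraph}
    (hθ : θ ∈ thetaStar v) :
    ∃ q ∈ vertexStar v i, q.1 = starSection v i θ.1 ∧ coverProj q = θ := by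
  obtain ⟨p, hp⟩ := θ
  obtain ⟨s, t, ht, rfl⟩ := exists_eq_arm hv hp hθ
  have htI := Ico_subset_Icc_self ht
  have hv' : |-v| = 1 := by rwa [abs_neg]
  have hcases : (i = none ∧ s ≠ 0) ∨ ∃ w, s = wordArm w ∧ (i = w.tail? ∨ i = some w) := by
    cases i with
    | none => exact (eq_or_ne s 0).symm.imp (fun h ↦ ⟨rfl, h⟩) fun h ↦ ⟨[], h, Or.inl rfl⟩
    | some w =>
      rcases eq_wordArm_or_exists_eq_wordArm_cons w s with h | ⟨b, h⟩
      · exact Or.inr ⟨w, h, Or.inr rfl⟩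
      · exact Or.inr ⟨b :: w, h, Or.inl rfl⟩
  rcases hcases with ⟨rfl, hs⟩ | ⟨w, rfl, rfl | rfl⟩
  · rw [starSection_none_arm hv hs ht]
    refine ⟨⟨(arm v s t, 0), arm_mem_thetaCircle hv hs htI, Or.inl rfl⟩, ?_, rfl,
      Subtype.ext (coverProj_of_eq_zero rfl)⟩
    exact (mem_vertexStar_iff_of_eq_zero rfl).2 ⟨rfl, hθ⟩
  · rw [starSection_tail_arm hv w ht]
    exact ⟨⟨_, mk_treePoint_mem_coverSet (abs_mul_wordSign hv w) w htI⟩,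
      mem_vertexStar_tail hv ht rfl, rfl, Subtype.ext (coverProj_of_eq_tail ht.1 rfl)⟩
  · rw [starSection_some_arm hv w ht]
    have ht' : 1 - t ∈ Ioc (0 : ℝ) 1 := ⟨by linarith [ht.2], by linarith [ht.1]⟩
    refine ⟨⟨_, mk_treePoint_mem_coverSet (abs_mul_wordSign hv' w) w (Ioc_subset_Icc_self ht')⟩,
      mem_vertexStar_some hv ht' rfl, rfl, Subtype.ext ?_⟩
    rw [coverProj_of_eq_some ht'.1.le rfl, sub_sub_cancel]

lemma isEvenlyCovered_of_sections {E B ι : Type*} [TopologicalSpace E] [TopologicalSpace B]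
    [TopologicalSpace ι] [DiscreteTopology ι] {f : E → B} (hf : Continuous f) {U : Set B}
    (hU : IsOpen U) (O : ι → Set E) (hO : ∀ i, IsOpen (O i))
    (hdisj : ∀ ⦃i j e⦄, e ∈ O i → e ∈ O j → i = j) (hcov : ∀ e, f e ∈ U → ∃ i, e ∈ O i)
    (s : ι → U → E) (hs : ∀ i, Continuous (s i)) (hfs : ∀ i u, f (s i u) = u)
    (hsO : ∀ i u, s i u ∈ O i) (hsf : ∀ i e (h : f e ∈ U), e ∈ O i → s i ⟨f e, h⟩ = e)
    {x : B} (hx : x ∈ U) : IsEvenlyCovered f x ι := by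
  choose c hc using hcov
  have hsheet (i : ι) : (fun e : f ⁻¹' U ↦ c e e.2) ⁻¹' {i} = Subtype.val ⁻¹' O i := by
    ext e
    exact ⟨fun h ↦ h ▸ hc e e.2, hdisj (hc e e.2)⟩
  refine ⟨inferInstance, U, hx, hU, hU.preimage hf,
    { toFun := fun e ↦ (⟨f e, e.2⟩, c e e.2)
      invFun := fun p ↦ ⟨s p.2 p.1, by simp [hfs]⟩
      left_inv := fun e ↦ Subtype.ext (hsf _ _ e.2 (hc _ _))
      right_inv := fun p ↦ Prod.ext (Subtype.ext (hfs _ _)) (hdisj (hc _ _) (hsO _ _))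
      continuous_toFun := ?_
      continuous_invFun := ?_ }, fun e ↦ rfl⟩
  · refine Continuous.prodMk (by fun_prop) (continuous_discrete_rng.2 fun i ↦ ?_)
    exact hsheet i ▸ (hO i).preimage continuous_subtype_val
  · exact (continuous_prod_of_discrete_right.2 hs).subtype_mk _

theorem isCoveringMap_coverProj : IsCoveringMap coverProj := by
  intro θ
  obtain ⟨v, hv, hθ⟩ := exists_mem_thetaStar θ
  let _ : TopologicalSpace (Option (List Bool)) := ⊥
  have : DiscreteTopology (Option (List Bool)) := ⟨rfl⟩
  choose s hs using fun i (θ : thetaStar v) ↦ exists_starSection_eq hv i θ.2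
  refine IsEvenlyCovered.to_isEvenlyCovered_preimage (I := Option (List Bool)) <|
    isEvenlyCovered_of_sections continuous_coverProj (isOpen_thetaStar v) (vertexStar v)
      (isOpen_vertexStar v) (fun _ _ _ ↦ vertexStar_disjoint hv)
      (fun _ ↦ exists_mem_vertexStar hv) s (fun i ↦ ?_) (fun i θ ↦ (hs i θ).2.2)
      (fun i θ ↦ (hs i θ).1) (fun i q hq hqi ↦ Subtype.ext ?_) hθ
  · exact Topology.IsInducing.subtypeVal.continuous_iff.2 <|
      (continuous_starSection v i).congr fun θ ↦ (hs i θ).2.1.symm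
  · rw [(hs i _).2.1, starSection_coverProj hv hqi]

end Covering

section Deformation

/-- The length which, at time `s` of the deformation of a tree to its root, remains of an edge at
depth `n`. It exceeds `1` at time `0`, it is nonpositive at time `1`, and the edges at depth `n` do
not start to shrink before those further out have vanished. -/
noncomputable def remainingLength (s : ℝ) (n : ℕ) : ℝ := (n + 2) * (1 - s * (n + 1))

lemma one_le_remainingLength_of_lt {s : ℝ} {m n : ℕ} (hmn : m < n)
    (hn : 0 < remainingLength s n) : 1 ≤ remainingLength s m := by
  have hmn : (m : ℝ) + 1 ≤ n := by exact_mod_cast hmn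
  have hs : 0 < 1 - s * (n + 1) := pos_of_mul_pos_right hn (by positivity)
  have hsm : s * (m + 2) ≤ 1 := by
    rcases le_total 0 s with h | h
    · linarith [mul_le_mul_of_nonneg_left hmn h]
    · linarith [mul_nonpos_of_nonpos_of_nonneg h (by positivity : (0 : ℝ) ≤ m + 2)]
  have hsm' : s * (m + 2) * (m + 1) ≤ 1 * (m + 1) := by gcongr
  rw [remainingLength]
  linarith

/-- The deformation of the binary tree to its root, at time `s`. -/
noncomputable def truncateTree (s : ℝ) (τ : List Bool → ℝ) (w : List Bool) : ℝ :=
  max 0 (min (τ w) (remainingLength s w.length))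

lemma truncateTree_apply_zero {s : ℝ} {τ : List Bool → ℝ} {w : List Bool} (h : τ w = 0) :
    truncateTree s τ w = 0 := by
  simp [truncateTree, h]

lemma truncateTree_zero (s : ℝ) : truncateTree s 0 = 0 :=
  funext fun _ ↦ truncateTree_apply_zero rfl

lemma truncateTree_time_zero {τ : List Bool → ℝ} (hτ : ∀ w, τ w ∈ Icc (0 : ℝ) 1) :
    truncateTree 0 τ = τ := by
  funext w
  have hle : τ w ≤ remainingLength 0 w.length := by
    have : (0 : ℝ) ≤ w.length := by positivity
    rw [remainingLength]
    linarith [(hτ w).2]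
  rw [truncateTree, min_eq_left hle, max_eq_right (hτ w).1]

lemma truncateTree_time_one (τ : List Bool → ℝ) : truncateTree 1 τ = 0 := by
  funext w
  have hle : remainingLength 1 w.length ≤ 0 :=
    mul_nonpos_of_nonneg_of_nonpos (by positivity) (by linarith [w.length.cast_nonneg (α := ℝ)])
  exact max_eq_left (min_le_of_right_le hle)

lemma truncateTree_treePoint_of_nonneg {s : ℝ} {w : List Bool}
    (h : w = [] ∨ 0 < remainingLength s w.length) (t : ℝ) :
    truncateTree s (treePoint w t) =
      treePoint w (max 0 (min t (remainingLength s w.length))) := by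
  funext u
  by_cases huw : u <:+ w
  · rcases eq_or_ne u w with rfl | hne
    · simp only [truncateTree, treePoint_self]
    · have hlt : u.length < w.length :=
        huw.length_le.lt_of_ne fun he ↦ hne (huw.eq_of_length he)
      have hw : w ≠ [] := List.ne_nil_of_length_pos (by lia)
      have hle := one_le_remainingLength_of_lt hlt (h.resolve_left hw)
      rw [truncateTree, treePoint_of_suffix _ huw hne, treePoint_of_suffix _ huw hne,
        min_eq_left hle, max_eq_right zero_le_one]
  · rw [treePoint_of_not_suffix _ huw, truncateTree_apply_zero (treePoint_of_not_suffix _ huw)]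

lemma truncateTree_treePoint_cons_of_nonpos {s : ℝ} {b : Bool} {w : List Bool}
    (h : remainingLength s (b :: w).length ≤ 0) (t : ℝ) :
    truncateTree s (treePoint (b :: w) t) = truncateTree s (treePoint w 1) := by
  rw [← treePoint_cons_zero b]
  funext u
  rcases eq_or_ne u (b :: w) with rfl | hu
  · rw [truncateTree, truncateTree, max_eq_left (min_le_of_right_le h),
      max_eq_left (min_le_of_right_le h)]
  · simp only [truncateTree, treePoint, hu, if_false]

lemma exists_truncateTree_treePoint_eq (s : ℝ) (w : List Bool) {t : ℝ} (ht : t ∈ Icc (0 : ℝ) 1) :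
    ∃ w', ∃ t' ∈ Icc (0 : ℝ) 1, truncateTree s (treePoint w t) = treePoint w' t' := by
  induction w generalizing t with
  | nil =>
    exact ⟨[], _, ⟨le_max_left _ _, max_le zero_le_one (min_le_of_left_le ht.2)⟩,
      truncateTree_treePoint_of_nonneg (Or.inl rfl) t⟩
  | cons b w ih =>
    rcases lt_or_ge 0 (remainingLength s (b :: w).length) with h | h
    · exact ⟨b :: w, _, ⟨le_max_left _ _, max_le zero_le_one (min_le_of_left_le ht.2)⟩,
        truncateTree_treePoint_of_nonneg (Or.inr h) t⟩
    · rw [truncateTree_treePoint_cons_of_nonpos h]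
      exact ih ⟨zero_le_one, le_rfl⟩

lemma mk_truncateTree_mem_coverSet (s : ℝ) (q : Cover) :
    (q.1.1, truncateTree s q.1.2) ∈ coverSet := by
  rcases q.2 with ⟨hp, h | ⟨hp', w, t, ht, h⟩⟩ <;> rw [h]
  · exact ⟨hp, Or.inl (truncateTree_zero s)⟩
  · obtain ⟨w', t', ht', h'⟩ := exists_truncateTree_treePoint_eq s w (Ioc_subset_Icc_self ht)
    rw [h']
    exact ⟨hp, (treePoint_eq_zero_or_exists_pos w' ht').imp id fun h'' ↦ ⟨hp', h''⟩⟩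

/-- The strong deformation retraction of `Cover` onto its diamond, as a function of time. -/
noncomputable def coverDeformation (z : ℝ × Cover) : Cover :=
  ⟨_, mk_truncateTree_mem_coverSet z.1 z.2⟩

lemma continuous_coverDeformation : Continuous coverDeformation := by
  unfold coverDeformation truncateTree remainingLength
  fun_prop

lemma treePoint_mem_Icc (w : List Bool) {t : ℝ} (ht : t ∈ Icc (0 : ℝ) 1) (u : List Bool) :
    treePoint w t u ∈ Icc (0 : ℝ) 1 := by
  unfold treePoint
  split_ifs <;> simp [ht.1, ht.2]

lemma coverDeformation_zero (q : Cover) : coverDeformation (0, q) = q := by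
  refine Subtype.ext (Prod.ext rfl (truncateTree_time_zero fun u ↦ ?_))
  change q.1.2 u ∈ Icc (0 : ℝ) 1
  rcases q.2.2 with h | ⟨-, w, t, ht, h⟩ <;> rw [h]
  · simp
  · exact treePoint_mem_Icc w (Ioc_subset_Icc_self ht) u

lemma coverDeformation_one (q : Cover) : (coverDeformation (1, q)).1.2 = 0 :=
  truncateTree_time_one _

lemma coverDeformation_of_eq_zero {q : Cover} (h : q.1.2 = 0) (s : ℝ) :
    coverDeformation (s, q) = q :=
  Subtype.ext (Prod.ext rfl (by simp only [coverDeformation, h, truncateTree_zero]))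

lemma coverProj_mem_thetaCircle {q : Cover} (h : q.1.2 = 0) : (coverProj q).1 ∈ thetaCircle := by
  rw [coverProj_of_eq_zero h]
  exact q.2.1

lemma abs_fst_eq_one_of_ne_zero {q : Cover} (h : q.1.2 ≠ 0) : |q.1.1.1| = 1 :=
  (q.2.2.resolve_left h).1

/-- The retraction of the theta graph onto its circle which maps the diagonal to the upper half of
the diamond. -/
def thetaRetraction (p : thetaGraph) : thetaCircle :=
  ⟨(p.1.1, p.1.2 + (1 - |p.1.1| - |p.1.2|)), by
    rcases p.2 with h | ⟨h, h'⟩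
    · have h' : 1 - |p.1.1| - |p.1.2| = 0 := by linarith
      rw [h', add_zero]
      exact h
    · simp [thetaCircle, h', abs_of_nonneg (sub_nonneg.2 h)]⟩

lemma continuous_thetaRetraction : Continuous thetaRetraction := by
  unfold thetaRetraction
  fun_prop

lemma coe_thetaRetraction {p : thetaGraph} (hp : p.1 ∈ thetaCircle) :
    (thetaRetraction p).1 = p.1 := by
  have hp : |p.1.1| + |p.1.2| = 1 := hp
  exact Prod.ext rfl (by simp only [thetaRetraction]; linarith)

end Deformation

section MoebiusBand

open Topology

lemma apply_eq_of_rel {Y : Type*} {φ : ℝ × ℝ → Y} (hφ : ∀ y, φ (0, y) = φ (1, -y)) {p q : Sq}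
    (h : rel p q) : φ p = φ q := by
  obtain ⟨⟨x, y⟩, hp⟩ := p
  obtain ⟨⟨x', y'⟩, hq⟩ := q
  simp only [rel, Prod.mk.injEq] at h
  rcases h with ⟨rfl, rfl⟩ | ⟨rfl, rfl, rfl⟩ | ⟨rfl, rfl, rfl⟩
  · rfl
  · simpa only [neg_neg] using hφ (-y')
  · simpa only [neg_neg] using (hφ (-y)).symm

/-- The function on the plane inducing the embedding `moebiusEmbedding`. -/
noncomputable def stripEmbedding (p : ℝ × ℝ) : ℂ × ℂ :=
  (Complex.exp (2 * Real.pi * Complex.I * p.1), p.2 * Complex.exp (Real.pi * Complex.I * p.1))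

lemma continuous_stripEmbedding : Continuous stripEmbedding := by
  unfold stripEmbedding
  fun_prop

lemma stripEmbedding_add_int (x y : ℝ) (n : ℤ) :
    stripEmbedding (x + n, (-1) ^ n * y) = stripEmbedding (x, y) := by
  have h₁ : Complex.exp (2 * Real.pi * Complex.I * (x + n : ℝ)) =
      Complex.exp (2 * Real.pi * Complex.I * x) :=
    Complex.exp_eq_exp_iff_exists_int.2 ⟨n, by push_cast; ring⟩
  have h₂ : Complex.exp (Real.pi * Complex.I * (x + n : ℝ)) =
      (-1) ^ n * Complex.exp (Real.pi * Complex.I * x) := by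
    rw [← Complex.exp_pi_mul_I, ← Complex.exp_int_mul, ← Complex.exp_add]
    congr 1
    push_cast
    ring
  have h₃ : ((-1 : ℂ) ^ n) * (-1) ^ n = 1 := by rw [← mul_zpow]; simp
  refine Prod.ext h₁ ?_
  simp only [stripEmbedding, h₂]
  push_cast
  linear_combination (y * Complex.exp (Real.pi * Complex.I * x)) * h₃

lemma stripEmbedding_zero_left (y : ℝ) : stripEmbedding (0, y) = stripEmbedding (1, -y) := by
  simpa using (stripEmbedding_add_int 0 y 1).symm

/-- The embedding of the Möbius band into `ℂ × ℂ` whose first coordinate is the projection onto the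
central circle. -/
noncomputable def moebiusEmbedding : M → ℂ × ℂ :=
  Quot.lift (fun p : Sq ↦ stripEmbedding p) fun _ _ ↦ apply_eq_of_rel stripEmbedding_zero_left

lemma exists_int_of_stripEmbedding_eq {x x' y y' : ℝ}
    (h : stripEmbedding (x, y) = stripEmbedding (x', y')) :
    ∃ n : ℤ, x = x' + n ∧ y' = (-1) ^ n * y := by
  obtain ⟨n, hn⟩ := Complex.exp_eq_exp_iff_exists_int.1 (congrArg Prod.fst h)
  have hx : x = x' + n := by
    have : (2 * Real.pi * Complex.I : ℂ) * x = 2 * Real.pi * Complex.I * (x' + n) := by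
      linear_combination hn
    exact_mod_cast mul_left_cancel₀ Complex.two_pi_I_ne_zero this
  have hy : (-1 : ℝ) ^ n * ((-1) ^ n * y) = y := by
    rw [← mul_assoc, ← mul_zpow]
    simp
  rw [← hy, hx, stripEmbedding_add_int] at h
  have h := mul_right_cancel₀ (Complex.exp_ne_zero _) (congrArg Prod.snd h)
  exact ⟨n, hx, by exact_mod_cast h.symm⟩

lemma rel_of_stripEmbedding_eq {p q : Sq} (h : stripEmbedding p = stripEmbedding q) :
    rel p q := by
  obtain ⟨⟨x, y⟩, ⟨hx₀, hx₁⟩, hy⟩ := p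
  obtain ⟨⟨x', y'⟩, ⟨hx₀', hx₁'⟩, hy'⟩ := q
  obtain ⟨n, rfl, rfl⟩ : ∃ n : ℤ, x = x' + n ∧ y' = (-1) ^ n * y :=
    exists_int_of_stripEmbedding_eq h
  dsimp only at hx₀ hx₁ hx₀' hx₁'
  have hn₁ : n ≤ 1 := by
    have : (n : ℝ) ≤ 1 := by linarith
    exact_mod_cast this
  have hn₂ : -1 ≤ n := by
    have : (-1 : ℝ) ≤ n := by linarith
    exact_mod_cast this
  interval_cases n
  · push_cast at hx₀
    exact Or.inr (Or.inl ⟨by push_cast; linarith, by dsimp only; linarith, by simp⟩)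
  · exact Or.inl (by simp)
  · push_cast at hx₁
    exact Or.inr (Or.inr ⟨by push_cast; linarith, by dsimp only; linarith, by simp⟩)

lemma injective_moebiusEmbedding : Function.Injective moebiusEmbedding := by
  rintro ⟨p⟩ ⟨q⟩ h
  exact Quot.sound (rel_of_stripEmbedding_eq h)

lemma continuous_qm : Continuous qm := continuous_quot_mk

lemma surjective_qm : Function.Surjective qm := Quot.mk_surjective

lemma continuous_moebiusEmbedding : Continuous moebiusEmbedding :=
  continuous_quot_lift _ (continuous_stripEmbedding.comp continuous_subtype_val)

lemma rel_of_qm_eq {p q : Sq} (h : qm p = qm q) : rel p q :=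
  rel_of_stripEmbedding_eq (congrArg moebiusEmbedding h)

instance : CompactSpace Sq := isCompact_iff_compactSpace.1 (isCompact_Icc.prod isCompact_Icc)

instance : CompactSpace M := inferInstanceAs (CompactSpace (Quot rel))

instance : T2Space M :=
  T2Space.of_injective_continuous injective_moebiusEmbedding continuous_moebiusEmbedding

lemma isEmbedding_moebiusEmbedding : IsEmbedding moebiusEmbedding :=
  (continuous_moebiusEmbedding.isClosedEmbedding injective_moebiusEmbedding).isEmbedding

/-- The retraction of the real line onto `[-1, 1]`. -/
noncomputable def clamp (y : ℝ) : ℝ := max (-1) (min y 1)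

@[fun_prop]
lemma continuous_clamp : Continuous clamp := by
  unfold clamp
  fun_prop

lemma clamp_mem (y : ℝ) : clamp y ∈ Icc (-1 : ℝ) 1 :=
  ⟨le_max_left _ _, max_le (by norm_num) (min_le_right _ _)⟩

lemma clamp_of_mem {y : ℝ} (hy : y ∈ Icc (-1 : ℝ) 1) : clamp y = y := by
  rw [clamp, min_eq_left hy.2, max_eq_right hy.1]

lemma clamp_neg (y : ℝ) : clamp (-y) = -clamp y := by
  grind [clamp]

lemma fract_neg_one_zpow_mul_clamp_mem_Sq (p : ℝ × ℝ) :
    (Int.fract p.1, (-1) ^ ⌊p.1⌋ * clamp p.2) ∈ Sq := by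
  refine ⟨⟨Int.fract_nonneg _, (Int.fract_lt_one _).le⟩, abs_le.1 ?_⟩
  rw [abs_mul, abs_zpow, abs_neg, abs_one, one_zpow, one_mul]
  exact abs_le.2 (clamp_mem p.2)

/-- The universal covering of the Möbius band by the strip `ℝ × [-1, 1]`, extended to the plane by
clamping the second coordinate. -/
noncomputable def stripMap (p : ℝ × ℝ) : M := qm ⟨_, fract_neg_one_zpow_mul_clamp_mem_Sq p⟩

lemma moebiusEmbedding_stripMap (p : ℝ × ℝ) :
    moebiusEmbedding (stripMap p) = stripEmbedding (p.1, clamp p.2) := by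
  have h := stripEmbedding_add_int (Int.fract p.1) ((-1) ^ ⌊p.1⌋ * clamp p.2) ⌊p.1⌋
  rw [Int.fract_add_floor, ← mul_assoc, ← mul_zpow] at h
  exact h.symm.trans (by simp)

@[fun_prop]
lemma continuous_stripMap : Continuous stripMap := by
  rw [isEmbedding_moebiusEmbedding.continuous_iff]
  have h : moebiusEmbedding ∘ stripMap = fun p ↦ stripEmbedding (p.1, clamp p.2) :=
    funext moebiusEmbedding_stripMap
  rw [h]
  exact continuous_stripEmbedding.comp (by fun_prop)

lemma stripMap_add_one_neg (x y : ℝ) : stripMap (x + 1, -y) = stripMap (x, y) := by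
  apply injective_moebiusEmbedding
  rw [moebiusEmbedding_stripMap, moebiusEmbedding_stripMap]
  simpa [clamp_neg] using stripEmbedding_add_int x (clamp y) 1

lemma stripMap_coe (p : Sq) : stripMap p = qm p := by
  apply injective_moebiusEmbedding
  rw [moebiusEmbedding_stripMap, clamp_of_mem p.2.2]
  rfl

lemma dist_center (p : ℝ × ℝ) : dist p (1 / 2, 0) = max |p.1 - 1 / 2| |p.2| := by
  rw [Prod.dist_eq, Real.dist_eq, Real.dist_eq, sub_zero]

lemma dist_center_zero_left (y : ℝ) :
    dist ((0, y) : ℝ × ℝ) (1 / 2, 0) = dist ((1, -y) : ℝ × ℝ) (1 / 2, 0) := by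
  simp only [dist_center, abs_neg]
  norm_num

/-- The distance from the centre of the removed disc, measured in the square with the sup distance
of `ℝ × ℝ`, so that its level sets are squares. -/
noncomputable def centerDist : M → ℝ :=
  Quot.lift (fun p : Sq ↦ dist (p : ℝ × ℝ) (1 / 2, 0)) fun _ _ ↦
    apply_eq_of_rel (φ := fun p ↦ dist p (1 / 2, 0)) dist_center_zero_left

@[fun_prop]
lemma continuous_centerDist : Continuous centerDist :=
  continuous_quot_lift _ (by fun_prop)

lemma centerDist_qm (p : Sq) : centerDist (qm p) = dist (p : ℝ × ℝ) (1 / 2, 0) := rfl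

lemma centerDist_stripMap {p : ℝ × ℝ} (hp : p ∈ Sq) :
    centerDist (stripMap p) = dist p (1 / 2, 0) :=
  (congrArg centerDist (stripMap_coe ⟨p, hp⟩)).trans (centerDist_qm _)

lemma mem_Xset_iff {m : M} : m ∈ Xset ↔ 1 / 4 ≤ centerDist m := by
  obtain ⟨p, rfl⟩ := surjective_qm m
  refine ⟨fun h ↦ ?_, ?_⟩
  · by_contra! hlt
    exact h ⟨p, hlt, rfl⟩
  · rintro h ⟨q, hq, hqp⟩
    rw [← hqp, centerDist_qm] at h
    exact h.not_gt hq

lemma one_div_four_le_centerDist (x : X) : 1 / 4 ≤ centerDist x := mem_Xset_iff.1 x.2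

lemma mem_C2_iff {x : X} : x ∈ C2 ↔ centerDist x = 1 / 4 := by
  constructor
  · rintro ⟨p, hp, h⟩
    rw [← hp]
    exact h
  · obtain ⟨p, hp⟩ := surjective_qm x.1
    intro h
    rw [← hp] at h
    exact ⟨p, hp, h⟩

lemma dist_center_eq_one_iff (p : Sq) :
    dist (p : ℝ × ℝ) (1 / 2, 0) = 1 ↔ p.1.2 = 1 ∨ p.1.2 = -1 := by
  obtain ⟨⟨x, y⟩, ⟨hx₀, hx₁⟩, hy⟩ := p
  have hx : |x - 1 / 2| ≤ 1 / 2 := abs_le.2 ⟨by linarith, by linarith⟩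
  rw [dist_center, ← abs_eq zero_le_one]
  grind

lemma mem_C1_iff {x : X} : x ∈ C1 ↔ centerDist x = 1 := by
  constructor
  · rintro ⟨p, hp, h⟩
    rw [← hp]
    exact (dist_center_eq_one_iff p).2 h
  · obtain ⟨p, hp⟩ := surjective_qm x.1
    intro h
    rw [← hp] at h
    exact ⟨p, hp, (dist_center_eq_one_iff p).1 h⟩

lemma mem_Bd_iff {x : X} : x ∈ Bd ↔ centerDist x = 1 ∨ centerDist x = 1 / 4 := by
  rw [← mem_C1_iff, ← mem_C2_iff]
  rfl

/-- The square with the open disc removed. -/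
def puncturedSq : Set (ℝ × ℝ) := {p ∈ Sq | 1 / 4 ≤ dist p (1 / 2, 0)}

/-- The quotient map from the punctured square onto the punctured Möbius band. -/
def qX : C(puncturedSq, X) where
  toFun p := ⟨qm ⟨p, p.2.1⟩, mem_Xset_iff.2 p.2.2⟩
  continuous_toFun := (continuous_qm.comp
    (continuous_subtype_val.subtype_mk fun p : puncturedSq ↦ p.2.1)).subtype_mk _

lemma surjective_qX : Function.Surjective qX := by
  intro x
  obtain ⟨p, hp⟩ := surjective_qm x.1
  have h := one_div_four_le_centerDist x
  rw [← hp] at h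
  exact ⟨⟨p, p.2, h⟩, Subtype.ext hp⟩

instance : CompactSpace puncturedSq := by
  have h : IsClosed {p : ℝ × ℝ | 1 / 4 ≤ dist p (1 / 2, 0)} :=
    isClosed_le continuous_const (by fun_prop)
  exact isCompact_iff_compactSpace.1 ((isCompact_Icc.prod isCompact_Icc).inter_right h)

lemma isQuotientMap_qX : IsQuotientMap qX :=
  .of_surjective_continuous surjective_qX qX.continuous

lemma isQuotientMap_prodMap_id_qX {K : Type*} [TopologicalSpace K] :
    IsQuotientMap ((ContinuousMap.id K).prodMap qX) := by
  have h : IsProperMap ((ContinuousMap.id K).prodMap qX) :=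
    isProperMap_id.prodMap qX.continuous.isProperMap
  exact h.isClosedMap.isQuotientMap h.continuous (Function.surjective_id.prodMap surjective_qX)

lemma apply_eq_of_qX_eq {Y : Type*} {φ : ℝ × ℝ → Y} (hφ : ∀ y, φ (0, y) = φ (1, -y))
    {p q : puncturedSq} (h : qX p = qX q) : φ p = φ q :=
  apply_eq_of_rel hφ (rel_of_qm_eq (congrArg Subtype.val h))

lemma stripMap_coe_puncturedSq (p : puncturedSq) : stripMap p = qX p :=
  stripMap_coe ⟨p, p.2.1⟩

lemma centerDist_qX (p : puncturedSq) : centerDist (qX p) = dist (p : ℝ × ℝ) (1 / 2, 0) := rfl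

lemma exists_continuousMap_prod_X {K Y : Type*} [TopologicalSpace K] [TopologicalSpace Y]
    {φ : K × (ℝ × ℝ) → Y} (hφ : ContinuousOn φ {z | z.2 ∈ puncturedSq})
    (h : ∀ k y, φ (k, (0, y)) = φ (k, (1, -y))) :
    ∃ Φ : C(K × X, Y), ∀ k (p : puncturedSq), Φ (k, qX p) = φ (k, p) := by
  let ψ : C(K × puncturedSq, Y) :=
    ⟨fun z ↦ φ (z.1, z.2), hφ.comp_continuous (by fun_prop) fun z ↦ z.2.2⟩
  have hψ : Function.FactorsThrough ψ ((ContinuousMap.id K).prodMap qX) := by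
    rintro ⟨k, p⟩ ⟨k', q⟩ hpq
    obtain ⟨rfl, hpq'⟩ : k = k' ∧ qX p = qX q := Prod.mk.inj hpq
    exact apply_eq_of_qX_eq (φ := fun p ↦ φ (k, p)) (h k) hpq'
  refine ⟨isQuotientMap_prodMap_id_qX.lift ψ hψ, fun k p ↦ ?_⟩
  exact DFunLike.congr_fun (isQuotientMap_prodMap_id_qX.lift_comp ψ hψ) (k, p)

end MoebiusBand

section RadialMaps

open AffineMap

/-- Reparametrisations `b` of the distance to the centre of the removed disc which, for each `k`,
leave everything outside the disc of radius `1 / 2` in place and map the annulus between the circles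
of radius `1 / 4` and `1 / 2` to itself. -/
structure IsRadialReparametrization {K : Type*} [TopologicalSpace K] (b : K × ℝ → ℝ) : Prop where
  continuous : Continuous b
  one_div_four_le : ∀ k, ∀ r ≥ 1 / 4, 1 / 4 ≤ b (k, r)
  eq_self : ∀ k, ∀ r ≥ 1 / 2, b (k, r) = r
  le_one_div_two : ∀ k, ∀ r ≤ 1 / 2, b (k, r) ≤ 1 / 2

lemma mem_Sq_of_dist_center_le {p : ℝ × ℝ} (hp : dist p (1 / 2, 0) ≤ 1 / 2) : p ∈ Sq := by
  obtain ⟨h₁, h₂⟩ := max_le_iff.1 ((dist_center p).symm.trans_le hp)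
  rw [abs_le] at h₁ h₂
  exact ⟨⟨by linarith, by linarith⟩, by linarith, by linarith⟩

variable {K : Type*} [TopologicalSpace K] {b : K × ℝ → ℝ}

lemma IsRadialReparametrization.homothety_mem_Sq_and_dist_eq (hb : IsRadialReparametrization b)
    (k : K) {p : ℝ × ℝ} (hp : p ∈ puncturedSq) :
    homothety (1 / 2, 0) (b (k, dist p (1 / 2, 0)) / dist p (1 / 2, 0)) p ∈ Sq ∧
      dist (homothety (1 / 2, 0) (b (k, dist p (1 / 2, 0)) / dist p (1 / 2, 0)) p) (1 / 2, 0) =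
        b (k, dist p (1 / 2, 0)) := by
  obtain ⟨hpSq, hp⟩ := hp
  have hb₀ := hb.one_div_four_le k _ hp
  have hdist : dist (homothety (1 / 2, 0) (b (k, dist p (1 / 2, 0)) / dist p (1 / 2, 0)) p)
      (1 / 2, 0) = b (k, dist p (1 / 2, 0)) := by
    rw [dist_homothety_center, dist_comm _ p, Real.norm_of_nonneg (by positivity),
      div_mul_cancel₀ _ (by linarith)]
  refine ⟨?_, hdist⟩
  rcases le_total (dist p (1 / 2, 0)) (1 / 2) with h | h
  · exact mem_Sq_of_dist_center_le (hdist.trans_le (hb.le_one_div_two k _ h))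
  · rwa [hb.eq_self k _ h, div_self (by linarith), homothety_one, AffineMap.id_apply]

lemma IsRadialReparametrization.exists_continuousMap (hb : IsRadialReparametrization b) :
    ∃ Φ : C(K × X, X), (∀ k (x : X), centerDist (Φ (k, x)) = b (k, centerDist x)) ∧
      ∀ k (x : X), b (k, centerDist x) = centerDist x → Φ (k, x) = x := by
  let φ (z : K × (ℝ × ℝ)) : M :=
    stripMap (homothety (1 / 2, 0) (b (z.1, dist z.2 (1 / 2, 0)) / dist z.2 (1 / 2, 0)) z.2)
  have hφ_self (k : K) (p : ℝ × ℝ) (hp : dist p (1 / 2, 0) ≠ 0)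
      (h : b (k, dist p (1 / 2, 0)) = dist p (1 / 2, 0)) : φ (k, p) = stripMap p := by
    simp only [φ, h, div_self hp, homothety_one, AffineMap.id_apply]
  have hφ : ContinuousOn φ {z | z.2 ∈ puncturedSq} := by
    have hfactor : ContinuousOn (fun z : K × (ℝ × ℝ) ↦
        b (z.1, dist z.2 (1 / 2, 0)) / dist z.2 (1 / 2, 0)) {z | z.2 ∈ puncturedSq} := by
      have hb' := hb.continuous
      refine ContinuousOn.div (by fun_prop) (by fun_prop) fun z hz ↦ ?_
      linarith [hz.2]
    simp only [φ, homothety_apply, vsub_eq_sub, vadd_eq_add]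
    exact continuous_stripMap.comp_continuousOn (by fun_prop)
  have hφ_glue (k : K) (y : ℝ) : φ (k, (0, y)) = φ (k, (1, -y)) := by
    have h : 1 / 2 ≤ dist ((0, y) : ℝ × ℝ) (1 / 2, 0) := by
      rw [dist_center]
      exact le_max_of_le_left (by norm_num)
    have h' := h.trans_eq (dist_center_zero_left y)
    rw [hφ_self _ _ (by linarith) (hb.eq_self k _ h),
      hφ_self _ _ (by linarith) (hb.eq_self k _ h'), ← stripMap_add_one_neg, zero_add]
  obtain ⟨Φ, hΦ⟩ := exists_continuousMap_prod_X hφ hφ_glue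
  have hdist (k : K) (x : X) : centerDist (Φ (k, x)) = b (k, centerDist x) := by
    obtain ⟨p, rfl⟩ := surjective_qX x
    obtain ⟨hSq, h⟩ := hb.homothety_mem_Sq_and_dist_eq k p.2
    rw [hΦ, centerDist_stripMap hSq, h, centerDist_qX]
  have hmem (z : K × X) : Φ z ∈ Xset := by
    rw [mem_Xset_iff, hdist]
    exact hb.one_div_four_le _ _ (one_div_four_le_centerDist _)
  refine ⟨⟨fun z ↦ ⟨Φ z, hmem z⟩, Φ.continuous.subtype_mk _⟩, hdist, fun k x h ↦ ?_⟩
  obtain ⟨p, rfl⟩ := surjective_qX x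
  have hp : dist (p : ℝ × ℝ) (1 / 2, 0) ≠ 0 := by linarith [p.2.2]
  exact Subtype.ext (((hΦ k p).trans (hφ_self k p hp h)).trans (stripMap_coe_puncturedSq p))

lemma exists_collar_collapse : ∃ S : C(unitInterval × X, X), (∀ x, S (0, x) = x) ∧
    (∀ t, ∀ x ∈ Bd, S (t, x) = x) ∧ ∀ x : X, centerDist x ≤ 3 / 8 → S (1, x) ∈ C2 := by
  let b (z : unitInterval × ℝ) : ℝ := max (1 / 4) (z.2 - 3 * z.1 * max 0 (1 / 2 - z.2))
  have hb : IsRadialReparametrization b := by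
    refine ⟨by fun_prop, fun _ _ _ ↦ le_max_left _ _, fun t r hr ↦ ?_, fun t r hr ↦ ?_⟩
    · simp only [b]
      rw [max_eq_left (by linarith : 1 / 2 - r ≤ 0), mul_zero, sub_zero,
        max_eq_right (by linarith)]
    · have : 0 ≤ (t : ℝ) * max 0 (1 / 2 - r) := mul_nonneg t.2.1 (le_max_left _ _)
      exact max_le (by norm_num) (by linarith)
  obtain ⟨S, hS, hS'⟩ := hb.exists_continuousMap
  refine ⟨S, fun x ↦ hS' _ _ ?_, fun t x hx ↦ hS' _ _ ?_, fun x hx ↦ mem_C2_iff.2 ?_⟩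
  · simpa [b] using one_div_four_le_centerDist x
  · rcases mem_Bd_iff.1 hx with h | h
    · exact hb.eq_self t _ (by linarith)
    · have : 0 ≤ (t : ℝ) := t.2.1
      rw [h]
      exact max_eq_left (by norm_num [this])
  · rw [hS]
    simp only [b, Set.Icc.coe_one]
    rw [max_eq_right (by linarith : (0 : ℝ) ≤ 1 / 2 - centerDist x)]
    exact max_eq_left (by linarith)

lemma exists_collar_push : ∃ P : C(unitInterval × X, X),
    (∀ t (x : X), centerDist (P (t, x)) = max (centerDist x) (1 / 4 + t / 8)) ∧
      ∀ x, P (0, x) = x := by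
  let b (z : unitInterval × ℝ) : ℝ := max z.2 (1 / 4 + z.1 / 8)
  have hb : IsRadialReparametrization b := by
    refine ⟨by fun_prop, fun _ _ h ↦ le_max_of_le_left h, fun t r hr ↦ max_eq_left ?_,
      fun t r hr ↦ max_le hr ?_⟩ <;> linarith [t.2.2]
  obtain ⟨P, hP, hP'⟩ := hb.exists_continuousMap
  refine ⟨P, hP, fun x ↦ hP' _ _ ?_⟩
  simpa [b] using one_div_four_le_centerDist x

end RadialMaps

section ThetaRetraction

lemma abs_clamp (y : ℝ) : |clamp y| = min |y| 1 := by grind [clamp]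

lemma clamp_of_one_le_abs {y c : ℝ} (hc : |c| = 1) (hy : 1 ≤ c * y) : clamp y = c := by
  rcases eq_or_eq_neg_of_abs_eq hc with rfl | rfl <;> grind [clamp]

/-- Soft thresholding: the signed distance of `y` from the interval `[-c, c]`. -/
noncomputable def softThreshold (c y : ℝ) : ℝ := y - max (-c) (min y c)

lemma abs_softThreshold {c : ℝ} (hc : 0 ≤ c) (y : ℝ) :
    |softThreshold c y| = max (|y| - c) 0 := by
  grind [softThreshold]

/-- How far a point of the square lies beyond the vertical sides of the square which bounds the
removed disc, in units of the half-width of that disc. -/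
noncomputable def sideExcess (p : ℝ × ℝ) : ℝ := max (4 * |p.1 - 1 / 2| - 1) 0

/-- The first of three coordinates on the spine of the punctured Möbius band, which consists of `C2`
and the image of the two segments joining `C2` horizontally to the vertical sides of the square.
This is the horizontal coordinate on `C2`, and `±1` on the two segments. -/
noncomputable def spineFst (p : ℝ × ℝ) : ℝ := clamp (4 * (p.1 - 1 / 2))

/-- The vertical coordinate on the part `C2` of the spine; it vanishes on the two segments. -/
noncomputable def spineSnd (p : ℝ × ℝ) : ℝ := softThreshold (2 * sideExcess p) (clamp (4 * p.2))

/-- The coordinate on the two segments of the spine, from `0` on `C2` to `1` on the sides of the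
square. -/
noncomputable def spineArc (p : ℝ × ℝ) : ℝ := max 0 (min (2 * sideExcess p - |clamp (4 * p.2)|) 1)

/-- The retraction of the punctured square onto the spine. -/
noncomputable def spineRetraction (p : ℝ × ℝ) : ℝ × ℝ :=
  (1 / 2 + spineFst p * (1 + spineArc p) / 4, spineSnd p / 4)

/-- The spine retraction, followed by the identification of the spine with the theta graph. -/
noncomputable def toTheta (p : ℝ × ℝ) : ℝ × ℝ :=
  (spineFst p * (1 - |spineSnd p| / 2) * (1 - spineArc p), spineSnd p * (1 - |spineFst p| / 2))

lemma continuous_spineRetraction : Continuous spineRetraction := by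
  unfold spineRetraction spineFst spineArc spineSnd softThreshold sideExcess
  fun_prop

lemma continuous_toTheta : Continuous toTheta := by
  unfold toTheta spineFst spineArc spineSnd softThreshold sideExcess
  fun_prop

lemma sideExcess_nonneg (p : ℝ × ℝ) : 0 ≤ sideExcess p := le_max_right _ _

lemma abs_spineFst_le (p : ℝ × ℝ) : |spineFst p| ≤ 1 := abs_le.2 (clamp_mem _)

lemma abs_spineSnd (p : ℝ × ℝ) : |spineSnd p| = max (|clamp (4 * p.2)| - 2 * sideExcess p) 0 :=
  abs_softThreshold (by linarith [sideExcess_nonneg p]) _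

lemma abs_spineSnd_le (p : ℝ × ℝ) : |spineSnd p| ≤ 1 := by
  have := abs_le.2 (clamp_mem (4 * p.2))
  rw [abs_spineSnd]
  exact max_le (by linarith [sideExcess_nonneg p]) zero_le_one

lemma spineArc_mem (p : ℝ × ℝ) : spineArc p ∈ Icc (0 : ℝ) 1 :=
  ⟨le_max_left _ _, max_le zero_le_one (min_le_right _ _)⟩

lemma spineArc_eq_zero_or (p : ℝ × ℝ) :
    spineArc p = 0 ∨ |spineFst p| = 1 ∧ spineSnd p = 0 := by
  refine or_iff_not_imp_left.2 fun h ↦ ?_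
  have hlt : |clamp (4 * p.2)| < 2 * sideExcess p := by
    by_contra! hle
    exact h (max_eq_left (min_le_of_left_le (by linarith)))
  have hpos : 0 < sideExcess p := by linarith [abs_nonneg (clamp (4 * p.2))]
  have hfst : 1 ≤ 4 * |p.1 - 1 / 2| := by
    by_contra! hlt'
    exact hpos.ne' (max_eq_right (by linarith))
  constructor
  · rw [spineFst, abs_clamp, abs_mul, abs_of_pos four_pos, min_eq_right hfst]
  · rw [← abs_eq_zero, abs_spineSnd, max_eq_right (by linarith)]

lemma spineSnd_eq_clamp {p : ℝ × ℝ} (h : |p.1 - 1 / 2| ≤ 1 / 4) :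
    spineSnd p = clamp (4 * p.2) := by
  have h₀ : sideExcess p = 0 := max_eq_right (by linarith)
  simp only [spineSnd, softThreshold, h₀]
  grind

lemma abs_spineFst_eq_one_or {p : ℝ × ℝ} (hp : 1 / 4 ≤ dist p (1 / 2, 0)) :
    |spineFst p| = 1 ∨ |spineSnd p| = 1 := by
  rcases le_total (1 / 4) |p.1 - 1 / 2| with h | h
  · left
    rw [spineFst, abs_clamp, abs_mul, abs_of_pos four_pos, min_eq_right (by linarith)]
  · rw [dist_center, le_max_iff] at hp
    rw [spineSnd_eq_clamp h, spineFst, abs_clamp, abs_clamp, abs_mul, abs_mul, abs_of_pos four_pos]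
    exact hp.imp (fun hp ↦ min_eq_right (by linarith)) fun hp ↦ min_eq_right (by linarith)

lemma toTheta_mem_thetaCircle {p : ℝ × ℝ} (hp : 1 / 4 ≤ dist p (1 / 2, 0))
    (h : spineArc p = 0) : toTheta p ∈ thetaCircle := by
  have h₁ : 0 ≤ 1 - |spineSnd p| / 2 := by linarith [abs_spineSnd_le p]
  have h₂ : 0 ≤ 1 - |spineFst p| / 2 := by linarith [abs_spineFst_le p]
  change |_| + |_| = (1 : ℝ)
  rw [toTheta, h, sub_zero, mul_one, abs_mul, abs_mul, abs_of_nonneg h₁, abs_of_nonneg h₂]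
  rcases abs_spineFst_eq_one_or hp with h | h <;> rw [h] <;> ring

lemma toTheta_mem_thetaGraph {p : ℝ × ℝ} (hp : 1 / 4 ≤ dist p (1 / 2, 0)) :
    toTheta p ∈ thetaGraph := by
  rcases spineArc_eq_zero_or p with h | ⟨h₁, h₂⟩
  · exact thetaCircle_subset_thetaGraph (toTheta_mem_thetaCircle hp h)
  · have h₃ := spineArc_mem p
    refine Or.inr ⟨?_, by simp [toTheta, h₂]⟩
    rw [toTheta, h₂, abs_zero, zero_div, sub_zero, mul_one, abs_mul, h₁, one_mul, abs_le]
    exact ⟨by linarith [h₃.2], by linarith [h₃.1]⟩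

lemma spine_of_dist_eq {p : ℝ × ℝ} (hp : dist p (1 / 2, 0) = 1 / 4) :
    spineArc p = 0 ∧ spineRetraction p = p := by
  obtain ⟨h₁, h₂⟩ := max_le_iff.1 ((dist_center p).symm.trans_le hp.le)
  have h₀ : sideExcess p = 0 := max_eq_right (by linarith)
  have harc : spineArc p = 0 := by
    rw [spineArc, h₀, mul_zero, zero_sub]
    exact max_eq_left (min_le_of_left_le (neg_nonpos.2 (abs_nonneg _)))
  rw [abs_le] at h₁ h₂
  have hfst : spineFst p = 4 * (p.1 - 1 / 2) := clamp_of_mem ⟨by linarith, by linarith⟩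
  have hsnd : spineSnd p = 4 * p.2 := by
    rw [spineSnd_eq_clamp (abs_le.2 h₁), clamp_of_mem ⟨by linarith, by linarith⟩]
  exact ⟨harc, Prod.ext (by simp only [spineRetraction, hfst, harc]; ring)
    (by simp only [spineRetraction, hsnd]; ring)⟩

lemma spine_of_abs_eq {x : ℝ} (hx : |x - 1 / 2| = 1 / 2) (y : ℝ) :
    spineFst (x, y) = 2 * (x - 1 / 2) ∧ spineSnd (x, y) = 0 ∧ spineArc (x, y) = 1 := by
  have h₀ : sideExcess (x, y) = 1 := by norm_num [sideExcess, hx]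
  have hy := abs_le.2 (clamp_mem (4 * y))
  refine ⟨clamp_of_one_le_abs ?_ ?_, ?_, ?_⟩
  · rw [abs_mul, hx]
    norm_num
  · have hsq := abs_mul_abs_self (x - 1 / 2)
    rw [hx] at hsq
    linarith
  · rw [← abs_eq_zero, abs_spineSnd, h₀, max_eq_right (by linarith)]
  · rw [spineArc, h₀, min_eq_right (by linarith), max_eq_right zero_le_one]

lemma spineRetraction_of_abs_eq {x : ℝ} (hx : |x - 1 / 2| = 1 / 2) (y : ℝ) :
    spineRetraction (x, y) = (x, 0) := by
  obtain ⟨h₁, h₂, h₃⟩ := spine_of_abs_eq hx y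
  exact Prod.ext (by simp only [spineRetraction, h₁, h₃]; ring) (by simp [spineRetraction, h₂])

lemma toTheta_of_abs_eq {x : ℝ} (hx : |x - 1 / 2| = 1 / 2) (y : ℝ) : toTheta (x, y) = 0 := by
  obtain ⟨-, h₂, h₃⟩ := spine_of_abs_eq hx y
  simp [toTheta, h₂, h₃]

lemma one_div_four_le_abs_segment {w s t : ℝ} (hw : 1 / 4 ≤ |w|) (hs : 1 ≤ s)
    (ht : t ∈ Icc (0 : ℝ) 1) : 1 / 4 ≤ |(1 - t) * w + t * (clamp (4 * w) * s / 4)| := by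
  have h₁ : t * 1 ≤ t * s := mul_le_mul_of_nonneg_left hs ht.1
  have h₂ : (1 - t) * (1 / 4) ≤ (1 - t) * |w| :=
    mul_le_mul_of_nonneg_left hw (sub_nonneg.2 ht.2)
  rcases abs_choice w with h | h <;> rw [h] at hw h₂
  · rw [clamp_of_one_le_abs abs_one (by linarith)]
    exact le_abs.2 (Or.inl (by linarith))
  · rw [clamp_of_one_le_abs (c := -1) (by simp) (by linarith)]
    exact le_abs.2 (Or.inr (by linarith))

lemma segment_spineRetraction_mem {p : ℝ × ℝ} (hp : p ∈ puncturedSq) {t : ℝ}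
    (ht : t ∈ Icc (0 : ℝ) 1) : (1 - t) • p + t • spineRetraction p ∈ puncturedSq := by
  obtain ⟨hpSq, hp⟩ := hp
  have hret : spineRetraction p ∈ Sq := by
    have h₁ := abs_le.1 (abs_spineFst_le p)
    have h₂ := abs_le.1 (abs_spineSnd_le p)
    have h₃ := spineArc_mem p
    refine ⟨⟨?_, ?_⟩, ?_, ?_⟩ <;> simp only [spineRetraction] <;> nlinarith [h₃.1, h₃.2]
  have hconvex : Convex ℝ Sq := (convex_Icc _ _).prod (convex_Icc _ _)
  refine ⟨hconvex hpSq hret (sub_nonneg.2 ht.2) ht.1 (sub_add_cancel _ _), ?_⟩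
  have hfst : ((1 - t) • p + t • spineRetraction p).1 - 1 / 2 =
      (1 - t) * (p.1 - 1 / 2) + t * (clamp (4 * (p.1 - 1 / 2)) * (1 + spineArc p) / 4) := by
    simp only [Prod.fst_add, Prod.smul_fst, smul_eq_mul, spineRetraction, spineFst]
    ring
  rw [dist_center, le_max_iff, hfst]
  rcases le_or_gt (1 / 4) |p.1 - 1 / 2| with h | h
  · exact Or.inl (one_div_four_le_abs_segment h (by linarith [(spineArc_mem p).1]) ht)
  · rw [dist_center, le_max_iff, or_iff_right h.not_ge] at hp
    right
    simpa [spineRetraction, spineSnd_eq_clamp h.le] using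
      one_div_four_le_abs_segment hp le_rfl ht

end ThetaRetraction

section ThetaDeformation

lemma stripMap_add_one_zero (x : ℝ) : stripMap (x + 1, 0) = stripMap (x, 0) := by
  simpa using stripMap_add_one_neg x 0

/-- The inverse of the identification of the spine with the theta graph: the diamond goes to `C2`,
and the rest of the horizontal diagonal to the arc which crosses the vertical sides of the
square. -/
noncomputable def ofTheta (θ : ℝ × ℝ) : M :=
  if 1 - |θ.1| ≤ 2 * |θ.2| then stripMap (1 / 2 + clamp (2 * θ.1) / 4, clamp (2 * θ.2) / 4)
  else stripMap (1 / 2 + (2 - θ.1) / 4, 0)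

lemma mem_thetaCircle_iff {θ : ℝ × ℝ} (hθ : θ ∈ thetaGraph) :
    θ ∈ thetaCircle ↔ 1 - |θ.1| ≤ 2 * |θ.2| := by
  refine ⟨fun h ↦ ?_, fun h ↦ hθ.elim id fun ⟨h₁, h₂⟩ ↦ ?_⟩
  · linarith [abs_nonneg θ.2, show |θ.1| + |θ.2| = 1 from h]
  · change |θ.1| + |θ.2| = 1
    rw [h₂, abs_zero] at h ⊢
    linarith

lemma ofTheta_of_mem {θ : ℝ × ℝ} (h : θ ∈ thetaCircle) :
    ofTheta θ = stripMap (1 / 2 + clamp (2 * θ.1) / 4, clamp (2 * θ.2) / 4) :=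
  if_pos ((mem_thetaCircle_iff (thetaCircle_subset_thetaGraph h)).1 h)

lemma continuous_ofTheta : Continuous fun θ : thetaGraph ↦ ofTheta θ := by
  refine continuous_if_le (by fun_prop) (by fun_prop) (by fun_prop) (by fun_prop) ?_
  rintro ⟨⟨x, y⟩, hθ⟩ h
  dsimp only at h ⊢
  have hcirc : |x| + |y| = 1 := (mem_thetaCircle_iff hθ).2 h.le
  obtain rfl : y = 0 := abs_eq_zero.1 (by linarith)
  have hx : |x| = 1 := by simpa using hcirc
  rcases eq_or_eq_neg_of_abs_eq hx with rfl | rfl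
  · norm_num [clamp]
  · have := stripMap_add_one_zero (1 / 4)
    norm_num [clamp] at this ⊢
    exact this.symm

lemma centerDist_ofTheta {θ : ℝ × ℝ} (h : θ ∈ thetaCircle) : centerDist (ofTheta θ) = 1 / 4 := by
  have hdist : dist ((1 / 2 + clamp (2 * θ.1) / 4, clamp (2 * θ.2) / 4) : ℝ × ℝ) (1 / 2, 0) =
      1 / 4 := by
    have hθ : |θ.1| + |θ.2| = 1 := h
    rw [dist_center, add_sub_cancel_left, abs_div, abs_div, abs_clamp, abs_clamp, abs_mul, abs_mul,
      abs_two, abs_of_pos (four_pos (α := ℝ))]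
    rcases le_total |θ.1| (1 / 2) with h | h
    · rw [min_eq_right (by linarith : (1 : ℝ) ≤ 2 * |θ.2|)]
      exact max_eq_right (by linarith [min_le_right (2 * |θ.1|) 1])
    · rw [min_eq_right (by linarith : (1 : ℝ) ≤ 2 * |θ.1|)]
      exact max_eq_left (by linarith [min_le_right (2 * |θ.2|) 1])
  rw [ofTheta_of_mem h, centerDist_stripMap (mem_Sq_of_dist_center_le (by rw [hdist]; norm_num)),
    hdist]

lemma ofTheta_mem_Xset {θ : ℝ × ℝ} (hθ : θ ∈ thetaGraph) : ofTheta θ ∈ Xset := by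
  rw [mem_Xset_iff]
  by_cases h : 1 - |θ.1| ≤ 2 * |θ.2|
  · exact (centerDist_ofTheta ((mem_thetaCircle_iff hθ).2 h)).ge
  obtain ⟨h₁, h₂⟩ := abs_le.1 (abs_fst_le_one_of_mem_thetaGraph hθ)
  have hdist {x : ℝ} (hx : |x - 1 / 2| ∈ Icc (1 / 4 : ℝ) (1 / 2)) :
      1 / 4 ≤ centerDist (stripMap (x, 0)) := by
    have hd : dist (x, (0 : ℝ)) (1 / 2, 0) = |x - 1 / 2| := by
      rw [dist_center, abs_zero, max_eq_left (abs_nonneg _)]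
    rw [centerDist_stripMap (mem_Sq_of_dist_center_le (hd.trans_le hx.2)), hd]
    exact hx.1
  rw [ofTheta, if_neg h]
  rcases le_total 0 θ.1 with h₀ | h₀
  · refine hdist ?_
    rw [abs_of_nonneg (by linarith)]
    constructor <;> linarith
  · have hshift : 1 / 2 + (2 - θ.1) / 4 = -θ.1 / 4 + 1 := by ring
    rw [hshift, stripMap_add_one_zero]
    refine hdist ?_
    rw [abs_of_nonpos (by linarith)]
    constructor <;> linarith

lemma clamp_two_mul {a b : ℝ} (h : |a| = 1 ∨ |b| = 1) (ha : |a| ≤ 1) (hb : |b| ≤ 1) :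
    clamp (2 * (a * (1 - |b| / 2))) = a := by
  rcases h with h | h
  · refine clamp_of_one_le_abs h ?_
    calc (1 : ℝ) ≤ 1 * (2 - |b|) := by linarith
      _ = |a| * |a| * (2 - |b|) := by rw [h, mul_one]
      _ = a * (2 * (a * (1 - |b| / 2))) := by rw [abs_mul_abs_self]; ring
  · rw [h, show 2 * (a * (1 - 1 / 2)) = a by ring, clamp_of_mem (abs_le.1 ha)]

lemma ofTheta_toTheta {p : ℝ × ℝ} (hp : 1 / 4 ≤ dist p (1 / 2, 0)) :
    ofTheta (toTheta p) = stripMap (spineRetraction p) := by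
  rcases eq_or_ne (spineArc p) 0 with h | h
  · have hor := abs_spineFst_eq_one_or hp
    have h₁ := abs_spineFst_le p
    have h₂ := abs_spineSnd_le p
    rw [ofTheta_of_mem (toTheta_mem_thetaCircle hp h)]
    simp only [toTheta, spineRetraction, h, sub_zero, mul_one, add_zero,
      clamp_two_mul hor h₁ h₂, clamp_two_mul hor.symm h₂ h₁]
  · obtain ⟨h₁, h₂⟩ := (spineArc_eq_zero_or p).resolve_left h
    have hmem := spineArc_mem p
    have hpos : 0 < spineArc p := hmem.1.lt_of_ne' h
    have htheta : toTheta p = (spineFst p * (1 - spineArc p), 0) := by simp [toTheta, h₂]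
    have hlt : ¬ 1 - |spineFst p * (1 - spineArc p)| ≤ 2 * |(0 : ℝ)| := by
      rw [abs_mul, h₁, one_mul, abs_of_nonneg (by linarith [hmem.2]), abs_zero]
      linarith
    rw [htheta, ofTheta, if_neg hlt, spineRetraction, h₂, zero_div]
    rcases eq_or_eq_neg_of_abs_eq h₁ with h₁ | h₁ <;> rw [h₁]
    · ring_nf
    · rw [← stripMap_add_one_zero (1 / 2 + -1 * (1 + spineArc p) / 4)]
      ring_nf

lemma exists_toTheta_continuousMap :
    ∃ j : C(X, thetaGraph), ∀ p : puncturedSq, (j (qX p)).1 = toTheta p := by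
  let ψ : C(puncturedSq, thetaGraph) :=
    ⟨fun p ↦ ⟨toTheta p, toTheta_mem_thetaGraph p.2.2⟩,
      (continuous_toTheta.comp continuous_subtype_val).subtype_mk _⟩
  have hglue (y : ℝ) : toTheta (0, y) = toTheta (1, -y) := by
    rw [toTheta_of_abs_eq (by norm_num), toTheta_of_abs_eq (by norm_num)]
  have hψ : Function.FactorsThrough ψ qX := fun p q hpq ↦
    Subtype.ext (apply_eq_of_qX_eq hglue hpq)
  exact ⟨isQuotientMap_qX.lift ψ hψ, fun p ↦
    congrArg Subtype.val (DFunLike.congr_fun (isQuotientMap_qX.lift_comp ψ hψ) p)⟩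

lemma exists_spine_homotopy :
    ∃ R : C(unitInterval × X, X), ∀ (t : unitInterval) (p : puncturedSq),
      (R (t, qX p)).1 = stripMap ((1 - t.1) • p.1 + t.1 • spineRetraction p) := by
  have hret := continuous_spineRetraction
  obtain ⟨Φ, hΦ⟩ := exists_continuousMap_prod_X
    (φ := fun z : unitInterval × (ℝ × ℝ) ↦
      stripMap ((1 - z.1.1) • z.2 + z.1.1 • spineRetraction z.2))
    (Continuous.continuousOn (by fun_prop)) fun t y ↦ by
      rw [spineRetraction_of_abs_eq (by norm_num), spineRetraction_of_abs_eq (by norm_num)]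
      have := stripMap_add_one_neg 0 ((1 - t.1) * y)
      simpa using this.symm
  have hmem (z : unitInterval × X) : Φ z ∈ Xset := by
    obtain ⟨p, hp⟩ := surjective_qX z.2
    have hseg := segment_spineRetraction_mem p.2 z.1.2
    rw [show z = (z.1, qX p) by rw [hp], hΦ, stripMap_coe_puncturedSq ⟨_, hseg⟩]
    exact (qX _).2
  exact ⟨⟨fun z ↦ ⟨Φ z, hmem z⟩, Φ.continuous.subtype_mk _⟩, hΦ⟩

lemma exists_thetaGraph_deformation :
    ∃ (j : C(X, thetaGraph)) (k : C(thetaGraph, X)) (R : C(unitInterval × X, X)),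
      (∀ x ∈ C2, (j x).1 ∈ thetaCircle) ∧ (∀ θ, θ.1 ∈ thetaCircle → k θ ∈ C2) ∧
      (∀ x, R (0, x) = x) ∧ (∀ x, R (1, x) = k (j x)) ∧ ∀ t, ∀ x ∈ C2, R (t, x) = x := by
  obtain ⟨j, hj⟩ := exists_toTheta_continuousMap
  obtain ⟨R, hR⟩ := exists_spine_homotopy
  let k : C(thetaGraph, X) :=
    ⟨fun θ ↦ ⟨ofTheta θ, ofTheta_mem_Xset θ.2⟩, continuous_ofTheta.subtype_mk _⟩
  refine ⟨j, k, R, fun x hx ↦ ?_, fun θ hθ ↦ mem_C2_iff.2 (centerDist_ofTheta hθ), fun x ↦ ?_,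
    fun x ↦ ?_, fun t x hx ↦ ?_⟩ <;> obtain ⟨p, rfl⟩ := surjective_qX x
  · rw [hj]
    exact toTheta_mem_thetaCircle p.2.2 (spine_of_dist_eq (mem_C2_iff.1 hx)).1
  · ext
    rw [hR, Icc.coe_zero, sub_zero, one_smul, zero_smul, add_zero,
      stripMap_coe_puncturedSq]
  · ext
    change _ = ofTheta (j (qX p))
    rw [hR, hj, ofTheta_toTheta p.2.2, Icc.coe_one, sub_self, zero_smul, one_smul,
      zero_add]
  · ext
    rw [hR, (spine_of_dist_eq (mem_C2_iff.1 hx)).2, ← add_smul, sub_add_cancel, one_smul,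
      stripMap_coe_puncturedSq]

end ThetaDeformation

section Lifting

open Topology

lemma exists_continuousMap_M {Y : Type*} [TopologicalSpace Y] {φ : ℝ × ℝ → Y} (hφ : Continuous φ)
    (h : ∀ y, φ (0, y) = φ (1, -y)) : ∃ Φ : C(M, Y), ∀ p : Sq, Φ (qm p) = φ p :=
  ⟨⟨Quot.lift (fun p : Sq ↦ φ p) fun _ _ ↦ apply_eq_of_rel h,
    continuous_quot_lift _ (hφ.comp continuous_subtype_val)⟩, fun _ ↦ rfl⟩

lemma stripMap_add_two (p : ℝ × ℝ) : stripMap (p.1 + 2, p.2) = stripMap p := by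
  have h := stripMap_add_one_neg (p.1 + 1) (-p.2)
  rwa [neg_neg, add_assoc, one_add_one_eq_two, stripMap_add_one_neg] at h

lemma centerDist_stripMap_one (x : ℝ) : centerDist (stripMap (x, 1)) = 1 := by
  rw [stripMap, centerDist_qm, dist_center_eq_one_iff]
  rcases Int.even_or_odd ⌊x⌋ with h | h <;> simp [h.neg_one_zpow, clamp]

/-- The universal covering of `C1`, as the upper edge of the strip covering the Möbius band. -/
noncomputable def edge : C(ℝ, C1) where
  toFun x := ⟨⟨stripMap (x, 1), mem_Xset_iff.2 (by norm_num [centerDist_stripMap_one])⟩,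
    mem_C1_iff.2 (centerDist_stripMap_one x)⟩
  continuous_toFun := by fun_prop

lemma coe_edge (x : ℝ) : ((edge x : X) : M) = stripMap (x, 1) := rfl

lemma stripMap_neg_one (x : ℝ) : stripMap (x, -1) = edge (x + 1) := by
  simpa [coe_edge] using (stripMap_add_one_neg x (-1)).symm

lemma exists_int_of_edge_eq {x y : ℝ} (h : edge x = edge y) : ∃ n : ℤ, x = y + n * 2 := by
  have h' : stripMap (x, 1) = stripMap (y, 1) := congrArg (fun c : C1 ↦ ((c : X) : M)) h
  have h₁ := congrArg moebiusEmbedding h'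
  simp only [moebiusEmbedding_stripMap] at h₁
  obtain ⟨n, hx, hn⟩ := exists_int_of_stripEmbedding_eq h₁
  rw [clamp_of_mem (by norm_num), mul_one] at hn
  rcases Int.even_or_odd n with ⟨m, rfl⟩ | hodd
  · exact ⟨m, by rw [hx]; push_cast; ring⟩
  · rw [hodd.neg_one_zpow] at hn
    norm_num at hn

lemma exists_edge_eq (c : C1) : ∃ x ∈ Icc (0 : ℝ) 2, edge x = c := by
  obtain ⟨⟨⟨x, y⟩, hp⟩, hpc, hy⟩ := c.2
  rw [← stripMap_coe] at hpc
  obtain ⟨h₀, h₁⟩ : 0 ≤ x ∧ x ≤ 1 := hp.1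
  rcases hy with rfl | rfl
  · exact ⟨x, ⟨h₀, by linarith⟩, Subtype.ext (Subtype.ext hpc)⟩
  · exact ⟨x + 1, ⟨by linarith, by linarith⟩,
      Subtype.ext (Subtype.ext ((stripMap_neg_one x).symm.trans hpc))⟩

lemma exists_continuousMap_prod_C1 {K Y : Type*} [TopologicalSpace K] [TopologicalSpace Y]
    {φ : K × ℝ → Y} (hφ : Continuous φ) (hper : ∀ k, Function.Periodic (fun x ↦ φ (k, x)) 2) :
    ∃ Φ : C(K × C1, Y), ∀ k x, Φ (k, edge x) = φ (k, x) := by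
  let e : C(Icc (0 : ℝ) 2, C1) := edge.restrict (Icc 0 2)
  have he : Function.Surjective e := fun c ↦
    let ⟨x, hx, hxc⟩ := exists_edge_eq c
    ⟨⟨x, hx⟩, hxc⟩
  have hproper : IsProperMap ((ContinuousMap.id K).prodMap e) :=
    isProperMap_id.prodMap e.continuous.isProperMap
  have hquot : IsQuotientMap ((ContinuousMap.id K).prodMap e) :=
    hproper.isClosedMap.isQuotientMap hproper.continuous (Function.surjective_id.prodMap he)
  have hφe (k : K) {x y : ℝ} (h : edge x = edge y) : φ (k, x) = φ (k, y) := by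
    obtain ⟨n, rfl⟩ := exists_int_of_edge_eq h
    exact (hper k).int_mul n y
  let ψ : C(K × Icc (0 : ℝ) 2, Y) := ⟨fun z ↦ φ (z.1, z.2), by fun_prop⟩
  have hψ : Function.FactorsThrough ψ ((ContinuousMap.id K).prodMap e) := by
    rintro ⟨k, x⟩ ⟨k', y⟩ h
    obtain ⟨rfl, hxy⟩ : k = k' ∧ e x = e y := Prod.mk.inj h
    exact hφe k hxy
  refine ⟨hquot.lift ψ hψ, fun k x ↦ ?_⟩
  obtain ⟨y, hy, hyx⟩ := exists_edge_eq (edge x)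
  rw [← hyx, ← hφe k hyx]
  exact DFunLike.congr_fun (hquot.lift_comp ψ hψ) (k, ⟨y, hy⟩)

lemma eq_of_coverProj_eq {q r : Cover} (hq : q.1.2 = 0) (hr : r.1.2 = 0)
    (h : coverProj q = coverProj r) : q = r := by
  refine Subtype.ext (Prod.ext ?_ (hq.trans hr.symm))
  rw [← coverProj_of_eq_zero hq, h, coverProj_of_eq_zero hr]

lemma lift_eq_of_root {A : Type*} [TopologicalSpace A] [PreconnectedSpace A] {F F' : C(A, Cover)}
    (h : ∀ a, coverProj (F a) = coverProj (F' a)) (a : A) (ha : (F a).1.2 = 0)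
    (ha' : (F' a).1.2 = 0) : F = F' :=
  DFunLike.ext' <| isCoveringMap_coverProj.eq_of_comp_eq F.continuous F'.continuous (funext h) a
    (eq_of_coverProj_eq ha ha' (h a))

lemma exists_lift_stripMap {u : C(M, thetaGraph)}
    (hu : ∀ x : ℝ, (u (stripMap (x, 1))).1 ∈ thetaCircle) :
    ∃ F : C(ℝ × ℝ, Cover), (∀ p, coverProj (F p) = u (stripMap p)) ∧
      ∀ x : ℝ, (F (x, 1)).1.2 = 0 := by
  let root : C(ℝ, Cover) := ⟨fun x ↦ ⟨((u (stripMap (x, 1))).1, 0), ⟨hu x, Or.inl rfl⟩⟩,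
    by fun_prop⟩
  have hroot (x : ℝ) : coverProj (root x) = u (stripMap (x, 1)) :=
    Subtype.ext (coverProj_of_eq_zero rfl)
  obtain ⟨F, ⟨hF₀, hF⟩, -⟩ := isCoveringMap_coverProj.existsUnique_continuousMap_lifts
    (u.comp ⟨stripMap, continuous_stripMap⟩) (0, 1) (root 0) (hroot 0)
  have hF (p : ℝ × ℝ) : coverProj (F p) = u (stripMap p) := congrFun hF p
  have hedge : F.comp ⟨fun x : ℝ ↦ (x, (1 : ℝ)), by fun_prop⟩ = root :=
    lift_eq_of_root (fun x ↦ (hF _).trans (hroot x).symm) 0 (congrArg (·.1.2) hF₀) rfl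
  exact ⟨F, hF, fun x ↦ congrArg (·.1.2) (DFunLike.congr_fun hedge x)⟩

lemma constant_base_of_ne_zero {ℓ : C(ℝ, Cover)} (hℓ : ∀ x, (ℓ x).1.2 ≠ 0) (x y : ℝ) :
    (ℓ x).1.1 = (ℓ y).1.1 := by
  have habs (x : ℝ) : |(ℓ x).1.1.1| = 1 := abs_fst_eq_one_of_ne_zero (hℓ x)
  have hsnd (x : ℝ) : (ℓ x).1.1.2 = 0 := snd_eq_zero_of_abs_fst (ℓ x).2.1 (habs x)
  refine Prod.ext ?_ ((hsnd x).trans (hsnd y).symm)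
  have hcont : Continuous fun x ↦ (ℓ x).1.1.1 := by fun_prop
  rcases isPreconnected_univ.eq_one_or_eq_neg_one_of_sq_eq hcont.continuousOn
    (fun x _ ↦ (sq_abs _).symm.trans (by rw [habs, one_pow]; rfl)) with h | h
  · exact (h (mem_univ x)).trans (h (mem_univ y)).symm
  · exact (h (mem_univ x)).trans (h (mem_univ y)).symm

lemma inessential_of_lift_ne_zero {v : C(C1, thetaCircle)} {ℓ : C(ℝ, Cover)}
    (hper : Function.Periodic ℓ 2) (hv : ∀ x, (v (edge x)).1 = (coverProj (ℓ x)).1)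
    (hℓ : ∀ x, (ℓ x).1.2 ≠ 0) : Inessential v := by
  let φ : unitInterval × ℝ → thetaCircle := fun z ↦
    thetaRetraction (coverProj (coverDeformation (z.1, ℓ z.2)))
  have hφ : Continuous φ := continuous_thetaRetraction.comp <| continuous_coverProj.comp <|
    continuous_coverDeformation.comp (by fun_prop)
  obtain ⟨Φ, hΦ⟩ := exists_continuousMap_prod_C1 hφ fun t x ↦ by simp only [φ, hper x]
  have hone (x : ℝ) : (φ (1, x)).1 = (ℓ x).1.1 := by
    have h := coverDeformation_one (ℓ x)
    exact (coe_thetaRetraction (coverProj_mem_thetaCircle h)).trans (coverProj_of_eq_zero h)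
  refine ⟨φ (1, 0), ⟨⟨Φ, fun c ↦ ?_, fun c ↦ ?_⟩⟩⟩ <;>
    obtain ⟨x, -, rfl⟩ := exists_edge_eq c <;> ext1
  · change (Φ (0, edge x)).1 = _
    have hx : (coverProj (ℓ x)).1 ∈ thetaCircle := hv x ▸ (v (edge x)).2
    simp only [hΦ, φ, Icc.coe_zero, coverDeformation_zero, coe_thetaRetraction hx, hv]
  · change (Φ (1, edge x)).1 = (φ (1, 0)).1
    rw [hΦ, hone, hone, constant_base_of_ne_zero hℓ]

lemma lift_add_one_neg {u : C(M, thetaGraph)} {F : C(ℝ × ℝ, Cover)}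
    (hF : ∀ p, coverProj (F p) = u (stripMap p)) (htop : ∀ x : ℝ, (F (x, 1)).1.2 = 0) {x₁ : ℝ}
    (hx₁ : (F (x₁, -1)).1.2 = 0) (x y : ℝ) : F (x + 1, -y) = F (x, y) := by
  have h : F.comp ⟨fun p : ℝ × ℝ ↦ (p.1 + 1, -p.2), by fun_prop⟩ = F :=
    lift_eq_of_root (fun p ↦ (hF _).trans (by rw [hF]; exact congrArg u (stripMap_add_one_neg _ _)))
      (x₁, -1) (by simpa using htop (x₁ + 1)) hx₁
  exact DFunLike.congr_fun h (x, y)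

lemma lift_add_two {u : C(M, thetaGraph)} {F : C(ℝ × ℝ, Cover)}
    (hF : ∀ p, coverProj (F p) = u (stripMap p)) (htop : ∀ x : ℝ, (F (x, 1)).1.2 = 0) (x y : ℝ) :
    F (x + 2, y) = F (x, y) := by
  have h : F.comp ⟨fun p : ℝ × ℝ ↦ (p.1 + 2, p.2), by fun_prop⟩ = F :=
    lift_eq_of_root (fun p ↦ (hF _).trans (by rw [hF]; exact congrArg u (stripMap_add_two p)))
      (0, 1) (htop _) (htop 0)
  exact DFunLike.congr_fun h (x, y)

-- If the lift of `u` to the strip missed the root circle on the lower edge, then the lower edge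
-- would lie in a contractible part of the cover, and contracting it would contract `v`.
lemma exists_lift_of_essential {u : C(M, thetaGraph)} {v : C(C1, thetaCircle)}
    (hv : ∀ c, (v c).1 = (u c.1.1).1) (hess : Essential v) :
    ∃ G : C(M, Cover), (∀ m, coverProj (G m) = u m) ∧ ∀ x ∈ C1, (G x.1).1.2 = 0 := by
  obtain ⟨F, hF, htop⟩ := exists_lift_stripMap (u := u) fun x ↦ hv (edge x) ▸ (v (edge x)).2
  obtain ⟨x₁, hx₁⟩ : ∃ x₁ : ℝ, (F (x₁, -1)).1.2 = 0 := by
    by_contra! hbot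
    let ℓ : C(ℝ, Cover) := F.comp ⟨fun x ↦ (x - 1, -1), by fun_prop⟩
    refine hess (inessential_of_lift_ne_zero (ℓ := ℓ) (fun x ↦ ?_) (fun x ↦ ?_) fun x ↦ hbot _)
    · simpa [ℓ, sub_add_eq_add_sub] using lift_add_two hF htop (x - 1) (-1)
    · simp [ℓ, hF, hv, stripMap_neg_one]
  have hglide := lift_add_one_neg hF htop hx₁
  obtain ⟨G, hG⟩ := exists_continuousMap_M F.continuous fun y ↦ by
    simpa using (hglide 0 y).symm
  refine ⟨G, fun m ↦ ?_, ?_⟩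
  · obtain ⟨p, rfl⟩ := surjective_qm m
    rw [hG, hF, stripMap_coe]
  · rintro x ⟨⟨⟨a, b⟩, hp⟩, hpx, rfl | rfl⟩ <;> rw [← hpx, hG]
    · exact htop a
    · rw [← hglide, neg_neg]
      exact htop _

end Lifting

section FirstDeformation

lemma BoundaryHomotopic.trans {f g h : C(X, X)} (hfg : BoundaryHomotopic f g)
    (hgh : BoundaryHomotopic g h) : BoundaryHomotopic f h := by
  obtain ⟨H, hH⟩ := hfg
  obtain ⟨K, hK⟩ := hgh
  refine ⟨H.trans K, fun x hx t ↦ ?_⟩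
  rw [ContinuousMap.Homotopy.trans_apply]
  split_ifs
  exacts [hH x hx _, hK x hx _]

lemma exists_retraction_C2 : ∃ r : C(X, C2), ∀ c : C2, r c = c := by
  obtain ⟨j, k, R, hj, hk, -, hR₁, hRC2⟩ := exists_thetaGraph_deformation
  let θ : C(X, thetaGraph) := ⟨fun x ↦ ⟨thetaRetraction (j x),
    thetaCircle_subset_thetaGraph (thetaRetraction (j x)).2⟩,
    (continuous_subtype_val.comp (continuous_thetaRetraction.comp j.continuous)).subtype_mk _⟩
  refine ⟨⟨fun x ↦ ⟨k (θ x), hk _ (thetaRetraction (j x)).2⟩, by fun_prop⟩, fun c ↦ ?_⟩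
  have hθ : θ c = j c := Subtype.ext (coe_thetaRetraction (hj c c.2))
  exact Subtype.ext ((congrArg k hθ).trans ((hR₁ c).symm.trans (hRC2 1 c c.2)))

lemma centerDist_le_of_mem_C2 {x : X} (hx : x ∈ C2) : centerDist x ≤ 3 / 8 := by
  rw [mem_C2_iff.1 hx]
  norm_num

lemma not_centerDist_le_of_mem_C1 {x : X} (hx : x ∈ C1) : ¬ centerDist x ≤ 3 / 8 := by
  rw [mem_C1_iff.1 hx]
  norm_num

lemma exists_boundaryHomotopic_comp_collar_collapse :
    ∃ σ : C(X, X), (∀ x ∈ Bd, σ x = x) ∧ (∀ x : X, centerDist x ≤ 3 / 8 → σ x ∈ C2) ∧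
      ∀ f : C(X, X), MapsTo f Bd Bd → BoundaryHomotopic f (f.comp σ) := by
  obtain ⟨S, hS₀, hSBd, hS₁⟩ := exists_collar_collapse
  refine ⟨⟨fun x ↦ S (1, x), by fun_prop⟩, hSBd 1, hS₁, fun f hf ↦
    ⟨⟨f.comp S, fun x ↦ congrArg f (hS₀ x), fun x ↦ rfl⟩, fun x hx t ↦ ?_⟩⟩
  exact (congrArg f (hSBd t x hx)).symm ▸ hf hx

lemma exists_boundaryHomotopic_eqOn_C2_const (f : C(X, X)) (hmaps : MapsTo f Bd C2)
    (h : Inessential (restrictMap f (hmaps.mono_left subset_union_right : MapsTo f C2 C2))) :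
    ∃ f' : C(X, X), ∃ p₀ ∈ C2, BoundaryHomotopic f f' ∧ (∀ x ∈ C2, f' x = p₀) ∧
      ∀ x ∈ C1, f' x = f x := by
  obtain ⟨b, ⟨H⟩⟩ := h
  obtain ⟨r, hr⟩ := exists_retraction_C2
  obtain ⟨σ, hσBd, hσC2, hfσ⟩ := exists_boundaryHomotopic_comp_collar_collapse
  let φ : C(unitInterval × X, unitInterval) :=
    ⟨fun z ↦ z.1 * projIcc 0 1 zero_le_one (3 - 8 * centerDist z.2), by fun_prop⟩
  have hH₀ (x : X) (hx : centerDist x ≤ 3 / 8) : (H (0, r (σ x)) : X) = f (σ x) := by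
    rw [H.apply_zero]
    exact congrArg (fun c : C2 ↦ f c) (hr ⟨_, hσC2 x hx⟩)
  let D : C(unitInterval × X, X) :=
    ⟨fun z ↦ if centerDist z.2 ≤ 3 / 8 then H (φ z, r (σ z.2)) else f (σ z.2), by
      refine Continuous.if_le (by fun_prop) (by fun_prop) (by fun_prop) (by fun_prop) ?_
      intro z hz
      have hφ : φ z = 0 := by norm_num [φ, hz]
      rw [hφ, hH₀ z.2 hz.le]⟩
  have hDC1 (t : unitInterval) (x : X) (hx : x ∈ C1) : D (t, x) = f x :=
    (if_neg (not_centerDist_le_of_mem_C1 hx)).trans (congrArg f (hσBd x (Or.inl hx)))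
  have hDC2 (t : unitInterval) (x : X) (hx : x ∈ C2) : D (t, x) = H (t, ⟨x, hx⟩) := by
    have hφ : φ (t, x) = t := by norm_num [φ, mem_C2_iff.1 hx]
    have hrσ : r (σ x) = ⟨x, hx⟩ := (congrArg r (hσBd x (Or.inr hx))).trans (hr ⟨x, hx⟩)
    exact (if_pos (centerDist_le_of_mem_C2 hx)).trans (by rw [hφ, hrσ])
  have hD₀ (x : X) : D (0, x) = f (σ x) := by
    have hφ : φ (0, x) = 0 := zero_mul _
    change (if centerDist x ≤ 3 / 8 then (H (φ (0, x), r (σ x)) : X) else f (σ x)) = f (σ x)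
    split_ifs with hx
    · rw [hφ, hH₀ x hx]
    · rfl
  refine ⟨⟨fun x ↦ D (1, x), by fun_prop⟩, b, b.2,
    (hfσ f (hmaps.mono_right subset_union_right)).trans ⟨⟨D, hD₀, fun x ↦ rfl⟩, ?_⟩,
    fun x hx ↦ (hDC2 1 x hx).trans (congrArg Subtype.val (H.apply_one _)), hDC1 1⟩
  rintro x (hx | hx) t
  · exact Or.inr ((hDC1 t x hx).symm ▸ hmaps (Or.inl hx))
  · exact Or.inr ((hDC2 t x hx).symm ▸ (H (t, ⟨x, hx⟩)).2)

lemma exists_boundaryHomotopic_const_near_C2 (f : C(X, X)) (hmaps : MapsTo f Bd C2)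
    (h : Inessential (restrictMap f (hmaps.mono_left subset_union_right : MapsTo f C2 C2))) :
    ∃ f₁ : C(X, X), ∃ p₀ ∈ C2, BoundaryHomotopic f f₁ ∧
      (∀ x : X, centerDist x ≤ 3 / 8 → f₁ x = p₀) ∧ ∀ x ∈ C1, f₁ x = f x := by
  obtain ⟨f', p₀, hp₀, hff', hf'C2, hf'C1⟩ := exists_boundaryHomotopic_eqOn_C2_const f hmaps h
  obtain ⟨σ, hσBd, hσC2, hf'σ⟩ := exists_boundaryHomotopic_comp_collar_collapse
  have hf' : MapsTo f' Bd Bd := by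
    rintro x (hx | hx)
    · exact Or.inr ((hf'C1 x hx).symm ▸ hmaps (Or.inl hx))
    · exact Or.inr ((hf'C2 x hx).symm ▸ hp₀)
  exact ⟨f'.comp σ, p₀, hp₀, hff'.trans (hf'σ f' hf'), fun x hx ↦ hf'C2 _ (hσC2 x hx),
    fun x hx ↦ (congrArg f' (hσBd x (Or.inl hx))).trans (hf'C1 x hx)⟩

end FirstDeformation

section SecondDeformation

open unitInterval

lemma isPreconnected_centerDist_le : IsPreconnected {m : M | centerDist m ≤ 3 / 8} := by
  have himage :
      {m : M | centerDist m ≤ 3 / 8} = stripMap '' Metric.closedBall (1 / 2, 0) (3 / 8) := by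
    ext m
    refine ⟨fun hm ↦ ?_, ?_⟩
    · obtain ⟨p, rfl⟩ := surjective_qm m
      rw [mem_ofPred_eq, centerDist_qm] at hm
      exact ⟨p, hm, stripMap_coe p⟩
    · rintro ⟨p, hp, rfl⟩
      have hpSq : p ∈ Sq := mem_Sq_of_dist_center_le (hp.trans (by norm_num))
      exact (centerDist_stripMap hpSq).trans_le hp
  rw [himage]
  exact (convex_closedBall _ _).isPreconnected.image _ continuous_stripMap.continuousOn

lemma exists_extension_M {Y : Type*} [TopologicalSpace Y] {f : C(X, Y)} {y₀ : Y}
    (h : ∀ x : X, centerDist x ≤ 3 / 8 → f x = y₀) :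
    ∃ F : C(M, Y), (∀ x : X, F x = f x) ∧ ∀ m, centerDist m ≤ 3 / 8 → F m = y₀ := by
  classical
  let F (m : M) : Y := if hm : m ∈ Xset then f ⟨m, hm⟩ else y₀
  have hFX (x : X) : F x = f x := dif_pos x.2
  have hF_near (m : M) (hm : centerDist m ≤ 3 / 8) : F m = y₀ := by
    by_cases hmX : m ∈ Xset
    · exact (dif_pos hmX).trans (h ⟨m, hmX⟩ hm)
    · exact dif_neg hmX
  have hX_far (m : {m : M | 3 / 8 ≤ centerDist m}) : m.1 ∈ Xset :=
    mem_Xset_iff.2 (le_trans (by norm_num) m.2)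
  have hF_far : ContinuousOn F {m | 3 / 8 ≤ centerDist m} := by
    rw [continuousOn_iff_continuous_domRestrict]
    exact (f.continuous.comp (continuous_subtype_val.subtype_mk hX_far)).congr
      fun m ↦ (hFX ⟨m, hX_far m⟩).symm
  have hF : ContinuousOn F ({m | centerDist m ≤ 3 / 8} ∪ {m | 3 / 8 ≤ centerDist m}) :=
    (continuousOn_const.congr hF_near).union_of_isClosed hF_far
      (isClosed_le continuous_centerDist continuous_const)
      (isClosed_le continuous_const continuous_centerDist)
  exact ⟨⟨F, continuousOn_univ.1 (hF.mono fun m _ ↦ le_total (centerDist m) (3 / 8))⟩, hFX, hF_near⟩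

lemma exists_deformation_into_thetaCircle {u : C(M, thetaGraph)} {v : C(C1, thetaCircle)}
    (hv : ∀ c, (v c).1 = (u c.1.1).1) (hess : Essential v) {s : Set M} (hs : IsPreconnected s)
    (hu : ∀ m ∈ s, ∀ m' ∈ s, u m = u m') :
    ∃ E : C(I × M, thetaGraph), (∀ m, E (0, m) = u m) ∧ (∀ m, (E (1, m)).1 ∈ thetaCircle) ∧
      (∀ t, ∀ x ∈ C1, (E (t, x.1)).1 ∈ thetaCircle) ∧ ∀ m ∈ s, ∀ m' ∈ s, E (1, m) = E (1, m') := by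
  obtain ⟨G, hGu, hGC1⟩ := exists_lift_of_essential hv hess
  have hG_const (m : M) (hm : m ∈ s) (m' : M) (hm' : m' ∈ s) : G m = G m' :=
    isCoveringMap_coverProj.constOn_of_comp hs G.continuous.continuousOn
      (fun a ha b hb ↦ (hGu a).trans ((hu a ha b hb).trans (hGu b).symm)) hm hm'
  refine ⟨⟨fun z ↦ coverProj (coverDeformation (z.1, G z.2)), ?_⟩, fun m ↦ ?_, fun m ↦ ?_,
    fun t x hx ↦ ?_, fun m hm m' hm' ↦ ?_⟩
  · exact continuous_coverProj.comp (continuous_coverDeformation.comp (by fun_prop))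
  · exact (congrArg coverProj (coverDeformation_zero (G m))).trans (hGu m)
  · exact coverProj_mem_thetaCircle (coverDeformation_one (G m))
  · rw [ContinuousMap.coe_mk, coverDeformation_of_eq_zero (hGC1 x hx)]
    exact coverProj_mem_thetaCircle (hGC1 x hx)
  · exact congrArg (fun q ↦ coverProj (coverDeformation ((1 : I), q))) (hG_const m hm m' hm')

lemma Inessential.comp_left {A B C : Type*} [TopologicalSpace A] [TopologicalSpace B]
    [TopologicalSpace C] {u : C(A, B)} (h : Inessential u) (w : C(B, C)) :
    Inessential (w.comp u) := by
  obtain ⟨b, hb⟩ := h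
  exact ⟨w b, (ContinuousMap.Homotopic.refl w).comp hb⟩

lemma exists_homotopy_into_C2 {f : C(X, X)} {p₀ : X} (hC1 : MapsTo f C1 C2)
    (hess : Essential (restrictMap f hC1)) (hp₀ : ∀ x : X, centerDist x ≤ 3 / 8 → f x = p₀) :
    ∃ (f₂ : C(X, X)) (E : f.Homotopy f₂), (∀ x, f₂ x ∈ C2) ∧ (∀ t, ∀ x ∈ C1, E (t, x) ∈ C2) ∧
      ∃ c ∈ C2, ∀ x : X, centerDist x ≤ 3 / 8 → f₂ x = c := by
  obtain ⟨j, k, R, hj, hk, hR₀, hR₁, hRC2⟩ := exists_thetaGraph_deformation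
  obtain ⟨F, hFf, hF_near⟩ := exists_extension_M hp₀
  let v : C(C1, thetaCircle) := ⟨fun c ↦ ⟨j (f c), hj _ (hC1 c.2)⟩, by fun_prop⟩
  let kC2 : C(thetaCircle, C2) :=
    ⟨fun θ ↦ ⟨k ⟨θ, thetaCircle_subset_thetaGraph θ.2⟩, hk _ θ.2⟩, by fun_prop⟩
  have hkv : kC2.comp v = restrictMap f hC1 :=
    ContinuousMap.ext fun c ↦ Subtype.ext ((hR₁ (f c)).symm.trans (hRC2 1 _ (hC1 c.2)))
  have hv : Essential v := fun h ↦ hess (hkv ▸ h.comp_left kC2)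
  obtain ⟨E, hE₀, hE₁, hEC1, hE_near⟩ := exists_deformation_into_thetaCircle (u := j.comp F)
    (fun c ↦ congrArg (fun x ↦ (j x).1) (hFf c.1).symm) hv isPreconnected_centerDist_le
    fun m hm m' hm' ↦ congrArg j ((hF_near m hm).trans (hF_near m' hm').symm)
  let f₂ : C(X, X) := ⟨fun x ↦ k (E (1, x.1)), by fun_prop⟩
  let H₁ : f.Homotopy ((k.comp j).comp f) :=
    ⟨⟨fun z ↦ R (z.1, f z.2), by fun_prop⟩, fun x ↦ hR₀ (f x), fun x ↦ hR₁ (f x)⟩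
  let H₂ : ((k.comp j).comp f).Homotopy f₂ :=
    ⟨⟨fun z ↦ k (E (z.1, z.2.1)), by fun_prop⟩,
      fun x ↦ congrArg k ((hE₀ x).trans (congrArg j (hFf x))), fun x ↦ rfl⟩
  have hH₁ (t : I) (x : X) (hx : x ∈ C1) : H₁ (t, x) ∈ C2 :=
    (hRC2 t _ (hC1 hx)).symm ▸ hC1 hx
  have hH₂ (t : I) (x : X) (hx : x ∈ C1) : H₂ (t, x) ∈ C2 := hk _ (hEC1 t x hx)
  refine ⟨f₂, H₁.trans H₂, fun x ↦ hk _ (hE₁ x), fun t x hx ↦ ?_,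
    k (E (1, stripMap (1 / 2, 0))), hk _ (hE₁ _), fun x hx ↦ congrArg k (hE_near x hx _ ?_)⟩
  · rw [ContinuousMap.Homotopy.trans_apply]
    split_ifs
    exacts [hH₁ _ x hx, hH₂ _ x hx]
  · rw [mem_ofPred_eq, centerDist_stripMap (mem_Sq_of_dist_center_le (by norm_num)), dist_self]
    norm_num

end SecondDeformation

section FixedPoints

open unitInterval

/-- A time parameter increasing from `0` to `1` as the distance `ρ` to the centre of the removed
disc runs from `1 / 4` to `5 / 16`. -/
noncomputable def collarTime (ρ : ℝ) : I := projIcc 0 1 zero_le_one (16 * ρ - 4)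

/-- A tent function of the distance `ρ` to the centre of the removed disc, supported on
`[1 / 4, 3 / 8]`, with its peak at `5 / 16` and the value `2 / 3` at `1 / 3`. -/
noncomputable def collarHeight (ρ : ℝ) : I :=
  projIcc 0 1 zero_le_one (min (16 * ρ - 4) (6 - 16 * ρ))

@[fun_prop]
lemma continuous_collarTime : Continuous collarTime := by
  unfold collarTime
  fun_prop

@[fun_prop]
lemma continuous_collarHeight : Continuous collarHeight := by
  unfold collarHeight
  fun_prop

lemma collarTime_one_div_four : collarTime (1 / 4) = 0 := projIcc_of_le_left _ (by norm_num)

lemma collarTime_of_le {ρ : ℝ} (h : 5 / 16 ≤ ρ) : collarTime ρ = 1 :=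
  projIcc_of_right_le _ (by linarith)

lemma collarHeight_eq_zero {ρ : ℝ} (h : ρ = 1 ∨ ρ = 1 / 4) : collarHeight ρ = 0 := by
  refine projIcc_of_le_left _ ?_
  rcases h with rfl | rfl <;> norm_num

lemma coe_collarHeight_of_mem {ρ : ℝ} (h : ρ ∈ Icc (1 / 4) (5 / 16)) :
    (collarHeight ρ : ℝ) = 16 * ρ - 4 := by
  obtain ⟨h₁, h₂⟩ := h
  rw [collarHeight, min_eq_left (by linarith),
    projIcc_of_mem zero_le_one ⟨by linarith, by linarith⟩]

lemma eq_one_div_three_of_eq_collarHeight {ρ : ℝ} (hρ : 5 / 16 ≤ ρ)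
    (h : ρ = 1 / 4 + collarHeight ρ / 8) : ρ = 1 / 3 := by
  rw [collarHeight, min_eq_right (by linarith), coe_projIcc, min_eq_right (by linarith)] at h
  rcases max_choice 0 (6 - 16 * ρ) with hmax | hmax <;> rw [hmax] at h <;> linarith

lemma coe_collarHeight_one_div_three : (collarHeight (1 / 3) : ℝ) = 2 / 3 := by
  rw [collarHeight, min_eq_right (by norm_num), projIcc_of_mem zero_le_one (by norm_num)]
  norm_num

variable {f f₂ : C(X, X)} {P : C(I × X, X)}

/-- The map obtained from a homotopy `E` by running it within the collar of `C2` and at the same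
time pushing its values off `C2` by means of `P`. -/
noncomputable def collarPush (P : C(I × X, X)) (E : f.Homotopy f₂) : C(X, X) :=
  ⟨fun x ↦ P (collarHeight (centerDist x), E (collarTime (centerDist x), x)), by fun_prop⟩

lemma boundaryHomotopic_collarPush (hP₀ : ∀ x, P (0, x) = x) (hf : MapsTo f C2 C2)
    (E : f.Homotopy f₂) (hEC1 : ∀ t, ∀ x ∈ C1, E (t, x) ∈ C2) :
    BoundaryHomotopic f (collarPush P E) := by
  let K : C(I × X, X) := ⟨fun z ↦ P (z.1 * collarHeight (centerDist z.2),
    E (z.1 * collarTime (centerDist z.2), z.2)), by fun_prop⟩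
  have hK_Bd {x : X} (hx : x ∈ Bd) (t : I) : K (t, x) = E (t * collarTime (centerDist x), x) := by
    have hheight : t * collarHeight (centerDist x) = 0 := by
      rw [collarHeight_eq_zero (mem_Bd_iff.1 hx), mul_zero]
    exact (congrArg (fun s ↦ P (s, _)) hheight).trans (hP₀ _)
  refine ⟨⟨K, fun x ↦ ?_, fun x ↦ ?_⟩, fun x hx t ↦ Or.inr ?_⟩
  · simp only [K, zero_mul, hP₀, E.apply_zero]
  · simp only [K, ContinuousMap.coe_mk, one_mul, collarPush]
  · change K (t, x) ∈ C2
    rw [hK_Bd hx]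
    rcases hx with hx | hx
    · exact hEC1 _ x hx
    · rw [mem_C2_iff.1 hx, collarTime_one_div_four, mul_zero, E.apply_zero]
      exact hf hx

lemma centerDist_of_collarPush_eq_self
    (hP : ∀ t (x : X), centerDist (P (t, x)) = max (centerDist x) (1 / 4 + t / 8))
    {E : f.Homotopy f₂} (hf₂ : ∀ x, f₂ x ∈ C2) {x : X} (hx : collarPush P E x = x) :
    centerDist x = 1 / 4 ∨ centerDist x = 1 / 3 := by
  have hdist : centerDist x = max (centerDist (E (collarTime (centerDist x), x)))
      (1 / 4 + collarHeight (centerDist x) / 8) :=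
    (congrArg (fun y : X ↦ centerDist y) hx).symm.trans (hP _ _)
  rcases le_total (centerDist x) (5 / 16) with hρ | hρ
  · left
    have hle := (le_max_right _ _).trans_eq hdist.symm
    rw [coe_collarHeight_of_mem ⟨one_div_four_le_centerDist x, hρ⟩] at hle
    linarith [one_div_four_le_centerDist x]
  · right
    rw [collarTime_of_le hρ, E.apply_one, mem_C2_iff.1 (hf₂ x), max_eq_right] at hdist
    · exact eq_one_div_three_of_eq_collarHeight hρ hdist
    · linarith [(collarHeight (centerDist x)).2.1]

lemma collarPush_fixedPoints (hP₀ : ∀ x, P (0, x) = x)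
    (hP : ∀ t (x : X), centerDist (P (t, x)) = max (centerDist x) (1 / 4 + t / 8))
    {p₀ c : X} (hf : ∀ x ∈ C2, f x = p₀) (E : f.Homotopy f₂) (hf₂ : ∀ x, f₂ x ∈ C2)
    (hcC2 : c ∈ C2) (hc : ∀ x : X, centerDist x ≤ 3 / 8 → f₂ x = c) :
    (∃ a b : X, {x : X | collarPush P E x = x} ⊆ {a, b}) ∧
      ∃ x₀ : X, {x : X | collarPush P E x = x ∧ x ∉ Bd} = {x₀} := by
  have hC2 (x : X) (hx : centerDist x = 1 / 4) : collarPush P E x = p₀ := by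
    rw [collarPush, ContinuousMap.coe_mk, hx, collarHeight_eq_zero (Or.inr rfl),
      collarTime_one_div_four, hP₀, E.apply_zero, hf x (mem_C2_iff.2 hx)]
  have h_third (x : X) (hx : centerDist x = 1 / 3) :
      collarPush P E x = P (collarHeight (1 / 3), c) := by
    rw [collarPush, ContinuousMap.coe_mk, hx, collarTime_of_le (by norm_num), E.apply_one,
      hc x (by rw [hx]; norm_num)]
  have hx₀ : centerDist (P (collarHeight (1 / 3), c)) = 1 / 3 := by
    rw [hP, mem_C2_iff.1 hcC2, coe_collarHeight_one_div_three]
    norm_num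
  refine ⟨⟨P (collarHeight (1 / 3), c), p₀, fun x hx ↦ ?_⟩, P (collarHeight (1 / 3), c), ?_⟩
  · rcases centerDist_of_collarPush_eq_self hP hf₂ hx with hρ | hρ
    · exact Or.inr (hx.symm.trans (hC2 x hρ))
    · exact Or.inl (hx.symm.trans (h_third x hρ))
  · refine eq_singleton_iff_unique_mem.2 ⟨⟨h_third _ hx₀, ?_⟩, ?_⟩
    · rw [mem_Bd_iff, hx₀]
      norm_num
    · rintro x ⟨hx, hxBd⟩
      rcases centerDist_of_collarPush_eq_self hP hf₂ hx with hρ | hρ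
      · exact absurd (mem_Bd_iff.2 (Or.inr hρ)) hxBd
      · exact hx.symm.trans (h_third x hρ)

end FixedPoints

/-- A boundary semi-essential map of the punctured Möbius band with `f(∂X) ⊆ C₂`,
`f|C₁ : C₁ → C₂` essential and `f|C₂ : C₂ → C₂` inessential, is boundary-homotopic to
a map with at most two fixed points, exactly one of which lies in the interior. -/
theorem stmt_14 (f : C(X, X)) (hf : BoundaryPreserving f)
    (hmaps : MapsTo f Bd C2)
    (he1 : Essential (restrictMap f (hmaps.mono_left Set.subset_union_left : MapsTo f C1 C2)))
    (h2 : Inessential (restrictMap f (hmaps.mono_left Set.subset_union_right : MapsTo f C2 C2))) :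
    ∃ g : C(X, X), BoundaryHomotopic f g ∧
      (∃ a b : X, {x : X | g x = x} ⊆ {a, b}) ∧
      ∃ x₀ : X, {x : X | g x = x ∧ x ∉ Bd} = {x₀} := by
  obtain ⟨f₁, p₀, hp₀, hff₁, hf₁p₀, hf₁f⟩ := exists_boundaryHomotopic_const_near_C2 f hmaps h2
  have hf₁C1 : MapsTo f₁ C1 C2 := fun x hx ↦ (hf₁f x hx).symm ▸ hmaps (Or.inl hx)
  have hf₁C2 : ∀ x ∈ C2, f₁ x = p₀ := fun x hx ↦ hf₁p₀ x (centerDist_le_of_mem_C2 hx)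
  have hess : Essential (restrictMap f₁ hf₁C1) := by
    convert he1 using 1
    exact ContinuousMap.ext fun x ↦ Subtype.ext (hf₁f x x.2)
  obtain ⟨f₂, E, hf₂, hEC1, c, hc, hf₂c⟩ := exists_homotopy_into_C2 hf₁C1 hess hf₁p₀
  obtain ⟨P, hP, hP₀⟩ := exists_collar_push
  have hf₁g : BoundaryHomotopic f₁ (collarPush P E) :=
    boundaryHomotopic_collarPush hP₀ (fun x hx ↦ (hf₁C2 x hx).symm ▸ hp₀) E hEC1
  exact ⟨collarPush P E, hff₁.trans hf₁g, collarPush_fixedPoints hP₀ hP hf₁C2 E hf₂ hc hf₂c⟩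

end PMB
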